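/- Let w be the unique radial positive solution of Δw − w + w³ = 0 in ℝ², let h ∈ C²(ℝ²) be homogeneous of degree p ≥ 2 with H(y) = ∫ h(x+y)w² having a unique critical point y₀, let ψ₁ be the unique solution of ∇ψ₁(0) = 0 and (−Δ+1−3w²)ψ₁ = −2w³/∫w⁴ − 2h(x+y₀)w/(p∫h(x+y₀)w²) in ℝ², and let ψ₂ = −(1/2)(w + x·∇w). Then ∫_{ℝ²} w ψ₁ = 0 and ∫_{ℝ²} w ψ₂ = 0. -/

import Mathlib

noncomputable section
open MeasureTheory Filter Real Set
open scoped RealInnerProductSpace Topology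

abbrev R2 : Type := EuclideanSpace ℝ (Fin 2)

/-- The Laplacian of `f : ℝ² → ℝ`. -/
def lap (f : R2 → ℝ) (x : R2) : ℝ :=
  ∑ i : Fin 2, fderiv ℝ (fun y => fderiv ℝ f y (EuclideanSpace.single i 1)) x
    (EuclideanSpace.single i 1)

/-- The linearized operator `L = -Δ + (1 - 3 w²)` applied to `f`. -/
def Lop (w f : R2 → ℝ) (x : R2) : ℝ := -lap f x + (1 - 3 * (w x) ^ 2) * f x

/-- `x · ∇f`. -/
def xgrad (f : R2 → ℝ) (x : R2) : ℝ := ⟪x, gradient f x⟫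

/-- First partial derivative `∂f/∂x₁`. -/
def pd1 (f : R2 → ℝ) (x : R2) : ℝ := fderiv ℝ f x (EuclideanSpace.single 0 1)

/-- `w` is the (radial positive) ground state of `Δw - w + w³ = 0` in `ℝ²`, `w ∈ H¹`. -/
structure IsGroundState (w : R2 → ℝ) : Prop where
  smooth : ContDiff ℝ 2 w
  pos : ∀ x, 0 < w x
  radial : ∀ x y : R2, ‖x‖ = ‖y‖ → w x = w y
  eqn : ∀ x, lap w x - w x + (w x) ^ 3 = 0
  sqInt : Integrable fun x => (w x) ^ 2
  quarticInt : Integrable fun x => (w x) ^ 4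
  gradSqInt : Integrable fun x => ‖gradient w x‖ ^ 2

/-- `h` is homogeneous of degree `p`. -/
def Homog (h : R2 → ℝ) (p : ℝ) : Prop :=
  ∀ t : ℝ, 0 < t → ∀ x : R2, h (t • x) = t ^ p * h x

/-- `H(y) = ∫ h(x+y) w(x)² dx`. -/
def Hfun (h w : R2 → ℝ) (y : R2) : ℝ := ∫ x, h (x + y) * (w x) ^ 2

/-- Determinant of the Hessian of `H` at `y`. -/
def hessDet (H : R2 → ℝ) (y : R2) : ℝ :=
  (fderiv ℝ (fun z => fderiv ℝ H z (EuclideanSpace.single 0 1)) y (EuclideanSpace.single 0 1)) *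
    (fderiv ℝ (fun z => fderiv ℝ H z (EuclideanSpace.single 1 1)) y (EuclideanSpace.single 1 1)) -
  (fderiv ℝ (fun z => fderiv ℝ H z (EuclideanSpace.single 0 1)) y (EuclideanSpace.single 1 1)) *
    (fderiv ℝ (fun z => fderiv ℝ H z (EuclideanSpace.single 1 1)) y (EuclideanSpace.single 0 1))

/-- The Gross–Pitaevskii energy functional. -/
def GPe (V : R2 → ℝ) (a : ℝ) (u : R2 → ℝ) : ℝ :=
  (∫ x, ‖gradient u x‖ ^ 2) + (∫ x, V x * (u x) ^ 2) - a / 2 * ∫ x, (u x) ^ 4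

/-- Admissible class: `u ∈ H¹`, `∫ V u² < ∞`, `‖u‖₂ = 1`. -/
def Admissible (V : R2 → ℝ) (u : R2 → ℝ) : Prop :=
  Integrable (fun x => (u x) ^ 2) ∧ Integrable (fun x => ‖gradient u x‖ ^ 2) ∧
    Integrable (fun x => V x * (u x) ^ 2) ∧ (∫ x, (u x) ^ 2) = 1

/-- `e(a)`, the ground state energy. -/
def gpInf (V : R2 → ℝ) (a : ℝ) : ℝ := sInf (GPe V a '' {u | Admissible V u})

/-- `u` is a positive minimizer of `e(a)`. -/
def IsPosMinimizer (V : R2 → ℝ) (a : ℝ) (u : R2 → ℝ) : Prop :=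
  Admissible V u ∧ GPe V a u = gpInf V a ∧ ∀ x, 0 < u x

/-- `x0` is the unique maximum point of `u`. -/
def IsUniqueMaxPt (u : R2 → ℝ) (x0 : R2) : Prop :=
  IsMaxOn u univ x0 ∧ ∀ z, IsMaxOn u univ z → z = x0

/-- The Lagrange multiplier `μ_a = e(a) - (a/2)∫u⁴`. -/
def lagrangeMul (V : R2 → ℝ) (a : ℝ) (u : R2 → ℝ) : ℝ :=
  gpInf V a - a / 2 * ∫ x, (u x) ^ 4

/-- A bounded function on `ℝ²`. -/
def BddFun (f : R2 → ℝ) : Prop := ∃ M, ∀ x, |f x| ≤ M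

/-!
The argument differentiates along the dilations `u_l(x) = l w(l x)`, whose generator at `l = 1` is
`Λw = w + x · ∇w`.

* `u_l` solves `Δu = l² u - u³`, so `L u_l = (1 - l²) u_l + u_l³ - 3 w² u_l`, and the `l`-derivative
  at `1` of `∫ u_l L ψ = ∫ ψ L u_l` is `∫ Λw L ψ = -2 ∫ w ψ`.
* If `h` is homogeneous of degree `p`, then `∫ h(x + y) u_l^k = l^(k - 2 - p) ∫ h(x + l y) w^k`.
  When `y` is critical for `∫ h(x + y) w^k`, the `l`-derivative at `1` is
  `k ∫ h(x + y) w^(k - 1) Λw = (k - 2 - p) ∫ h(x + y) w^k`.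

With `h = 1` and `k = 2` the second identity gives `∫ w Λw = 0`. With `h = 1`, `k = 4`, and with the
given `h`, `k = 2`, it shows that the two terms of `∫ Λw L ψ₁` are `-1` and `1`, so the first
identity yields `∫ w ψ₁ = 0`. Differentiating under the integral and the symmetry of `L` rest on the
exponential decay of `w` and `∇w`, which comes from comparison in the radial equation.
-/

section RadialODE

variable {f f' u u' u'' : ℝ → ℝ} {R κ : ℝ}

lemma monotoneOn_Ici_of_hasDerivAt_nonneg (hf : ∀ r ≥ R, HasDerivAt f (f' r) r)
    (hf' : ∀ r ≥ R, 0 ≤ f' r) : MonotoneOn f (Ici R) :=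
  monotoneOn_of_hasDerivWithinAt_nonneg (convex_Ici R)
    (fun r hr => (hf r hr).continuousAt.continuousWithinAt)
    (fun r hr => (hf r (interior_subset hr)).hasDerivWithinAt)
    (fun r hr => hf' r (interior_subset hr))

lemma antitoneOn_Ici_of_hasDerivAt_nonpos (hf : ∀ r ≥ R, HasDerivAt f (f' r) r)
    (hf' : ∀ r ≥ R, f' r ≤ 0) : AntitoneOn f (Ici R) :=
  antitoneOn_of_hasDerivWithinAt_nonpos (convex_Ici R)
    (fun r hr => (hf r hr).continuousAt.continuousWithinAt)
    (fun r hr => (hf r (interior_subset hr)).hasDerivWithinAt)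
    (fun r hr => hf' r (interior_subset hr))

lemma tendsto_sq_zero_of_integrableOn_sq (hu : ∀ r > R, HasDerivAt u (u' r) r)
    (hu'_meas : AEStronglyMeasurable u' (volume.restrict (Ioi R)))
    (hint : IntegrableOn (fun r => u r ^ 2) (Ioi R))
    (hint' : IntegrableOn (fun r => u' r ^ 2) (Ioi R)) :
    Tendsto (fun r => u r ^ 2) atTop (𝓝 0) := by
  have hu_meas : AEStronglyMeasurable u (volume.restrict (Ioi R)) :=
    ContinuousOn.aestronglyMeasurable
      (fun r hr => (hu r hr).continuousAt.continuousWithinAt) measurableSet_Ioi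
  have hderiv : ∀ r ∈ Ioi R, HasDerivAt (fun r => u r ^ 2) (2 * (u r * u' r)) r := fun r hr =>
    ((hu r hr).fun_pow 2).congr_deriv (by norm_num; ring)
  have hint_mul : IntegrableOn (fun r => u r * u' r) (Ioi R) :=
    ((memLp_two_iff_integrable_sq hu_meas).2 hint).integrable_mul
      ((memLp_two_iff_integrable_sq hu'_meas).2 hint')
  exact tendsto_zero_of_hasDerivAt_of_integrableOn_Ioi hderiv (hint_mul.const_mul 2) hint

lemma deriv_nonpos_of_monotoneOn_mul_deriv (hR : 0 < R) (hu : ∀ r ≥ R, HasDerivAt u (u' r) r)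
    (hpos : ∀ r ≥ R, 0 < u r) (hlim : Tendsto u atTop (𝓝 0))
    (hmono : MonotoneOn (fun r => r * u' r) (Ici R)) {r : ℝ} (hr : R ≤ r) : u' r ≤ 0 := by
  by_contra! hderiv_pos
  have hderiv_nonneg : ∀ s ≥ r, 0 ≤ u' s := fun s hs => by
    have hle : r * u' r ≤ s * u' s := hmono hr (hr.trans hs) hs
    have : 0 < s * u' s := (mul_pos (hR.trans_le hr) hderiv_pos).trans_le hle
    exact (pos_of_mul_pos_right this (by linarith)).le
  have hu_mono : MonotoneOn u (Ici r) :=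
    monotoneOn_Ici_of_hasDerivAt_nonneg (fun s hs => hu s (hr.trans hs)) hderiv_nonneg
  have : u r ≤ 0 := ge_of_tendsto hlim <| by
    filter_upwards [eventually_ge_atTop r] with s hs using hu_mono self_mem_Ici hs hs
  exact this.not_gt (hpos r hr)

-- The energy `u'² - κ²u²` is nonincreasing, and a negative value would keep `u` away from `0`.
lemma mul_le_neg_deriv_of_sq_mul_le (hu : ∀ r ≥ R, HasDerivAt u (u' r) r)
    (hu' : ∀ r ≥ R, HasDerivAt u' (u'' r) r) (hlim : Tendsto u atTop (𝓝 0))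
    (hderiv : ∀ r ≥ R, u' r ≤ 0) (hconv : ∀ r ≥ R, κ ^ 2 * u r ≤ u'' r) {r : ℝ} (hr : R ≤ r) :
    κ * u r ≤ -u' r := by
  have henergy_deriv : ∀ s ≥ R, HasDerivAt (fun s => u' s ^ 2 - κ ^ 2 * u s ^ 2)
      (2 * (u' s * (u'' s - κ ^ 2 * u s))) s := fun s hs =>
    (((hu' s hs).fun_pow 2).fun_sub (((hu s hs).fun_pow 2).const_mul _)).congr_deriv
      (by norm_num; ring)
  have henergy_anti : AntitoneOn (fun s => u' s ^ 2 - κ ^ 2 * u s ^ 2) (Ici R) :=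
    antitoneOn_Ici_of_hasDerivAt_nonpos henergy_deriv fun s hs => by
      nlinarith [hderiv s hs, hconv s hs]
  have hlim_sq : Tendsto (fun s => -(κ ^ 2 * u s ^ 2)) atTop (𝓝 0) := by
    simpa using ((hlim.pow 2).const_mul (κ ^ 2)).neg
  have henergy_nonneg : 0 ≤ u' r ^ 2 - κ ^ 2 * u r ^ 2 := le_of_tendsto hlim_sq <| by
    filter_upwards [eventually_ge_atTop r] with s hs
    have : u' s ^ 2 - κ ^ 2 * u s ^ 2 ≤ u' r ^ 2 - κ ^ 2 * u r ^ 2 :=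
      henergy_anti hr (hr.trans hs) hs
    linarith [sq_nonneg (u' s)]
  refine le_of_sq_le_sq ?_ (neg_nonneg.2 (hderiv r hr))
  linarith [mul_pow κ (u r) 2, neg_sq (u' r)]

lemma le_mul_exp_of_mul_le_neg_deriv (hu : ∀ r ≥ R, HasDerivAt u (u' r) r)
    (hκ : ∀ r ≥ R, κ * u r ≤ -u' r) {r : ℝ} (hr : R ≤ r) :
    u r ≤ u R * exp (-κ * (r - R)) := by
  have hanti : AntitoneOn (fun s => u s * exp (κ * (s - R))) (Ici R) :=
    antitoneOn_Ici_of_hasDerivAt_nonpos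
      (f' := fun s => (u' s + κ * u s) * exp (κ * (s - R)))
      (fun s hs => ((hu s hs).mul
        (((hasDerivAt_id s).sub_const R).const_mul κ).exp).congr_deriv
          (by simp only [id_eq, mul_one]; ring))
      fun s hs => mul_nonpos_of_nonpos_of_nonneg (by linarith [hκ s hs]) (exp_nonneg _)
  have hle : u r * exp (κ * (r - R)) ≤ u R := by simpa using hanti self_mem_Ici hr hr
  calc u r = u r * exp (κ * (r - R)) * exp (-κ * (r - R)) := by
        rw [mul_assoc, ← exp_add]; simp
    _ ≤ u R * exp (-κ * (r - R)) := by gcongr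

lemma neg_deriv_le_of_monotoneOn_deriv (hu : ∀ r ≥ R, HasDerivAt u (u' r) r)
    (hmono : MonotoneOn u' (Ici R)) {r : ℝ} (hr : R + 1 ≤ r) : -u' r ≤ u (r - 1) - u r := by
  obtain ⟨c, ⟨hc_left, hc_right⟩, hc⟩ := exists_hasDerivAt_eq_slope u u' (sub_one_lt r)
    (fun s hs => (hu s (by linarith [hs.1])).continuousAt.continuousWithinAt)
    (fun s hs => hu s (by linarith [hs.1]))
  have : u' c ≤ u' r := hmono (by simp only [mem_Ici]; linarith) (by simp only [mem_Ici]; linarith)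
    hc_right.le
  rw [hc, sub_sub_cancel, div_one] at this
  linarith

theorem exists_exp_bound_of_radial_ode (hR : 0 < R) (hu : ∀ r ≥ R, HasDerivAt u (u' r) r)
    (hu' : ∀ r ≥ R, HasDerivAt u' (u'' r) r) (hpos : ∀ r ≥ R, 0 < u r)
    (hlim : Tendsto u atTop (𝓝 0)) (hode : ∀ r ≥ R, κ ^ 2 * u r ≤ u'' r + u' r / r) :
    ∃ C, ∀ r ≥ R + 1, u r ≤ C * exp (-κ * r) ∧ |u' r| ≤ C * exp (-κ * r) := by
  have hmono_mul : MonotoneOn (fun r => r * u' r) (Ici R) :=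
    monotoneOn_Ici_of_hasDerivAt_nonneg (fun r hr => (hasDerivAt_id r).mul (hu' r hr))
      fun r hr => by
        have hr0 : 0 < r := hR.trans_le hr
        calc (0 : ℝ) ≤ r * (u'' r + u' r / r) :=
              mul_nonneg hr0.le ((mul_nonneg (sq_nonneg κ) (hpos r hr).le).trans (hode r hr))
          _ = 1 * u' r + id r * u'' r := by simp only [id]; field_simp; ring
  have hderiv : ∀ r ≥ R, u' r ≤ 0 := fun r hr =>
    deriv_nonpos_of_monotoneOn_mul_deriv hR hu hpos hlim hmono_mul hr
  have hconv : ∀ r ≥ R, κ ^ 2 * u r ≤ u'' r := fun r hr => by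
    linarith [hode r hr, div_nonpos_of_nonpos_of_nonneg (hderiv r hr) (hR.le.trans hr)]
  have hmono : MonotoneOn u' (Ici R) := monotoneOn_Ici_of_hasDerivAt_nonneg hu' fun r hr =>
    (mul_nonneg (sq_nonneg κ) (hpos r hr).le).trans (hconv r hr)
  have hbound : ∀ r ≥ R, u r ≤ u R * exp (-κ * (r - R)) := fun r hr =>
    le_mul_exp_of_mul_le_neg_deriv hu
      (fun s hs => mul_le_neg_deriv_of_sq_mul_le hu hu' hlim hderiv hconv hs) hr
  have hanti : AntitoneOn u (Ici R) := antitoneOn_Ici_of_hasDerivAt_nonpos hu hderiv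
  have hshift : ∀ r ≥ R + 1, u (r - 1) ≤ u R * exp (κ * (R + 1)) * exp (-κ * r) := fun r hr => by
    rw [mul_assoc, ← exp_add]
    exact (hbound (r - 1) (by linarith)).trans_eq (by ring_nf)
  refine ⟨u R * exp (κ * (R + 1)), fun r hr => ⟨?_, ?_⟩⟩
  · exact (hanti (by simp only [mem_Ici]; linarith) (by simp only [mem_Ici]; linarith)
      (sub_le_self r zero_le_one)).trans (hshift r hr)
  · rw [abs_of_nonpos (hderiv r (by linarith))]
    linarith [neg_deriv_le_of_monotoneOn_deriv hu hmono hr, hpos r (by linarith), hshift r hr]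

end RadialODE

section GrowthAndDecay

variable {E F : Type*} [NormedAddCommGroup E] [NormedAddCommGroup F]

/-- `f` is bounded by a polynomial in `‖x‖`. Such functions are the weights against which rapidly
decaying functions are integrated. -/
def HasPolynomialGrowth (f : E → F) : Prop :=
  ∃ (N : ℕ) (C : ℝ), ∀ x, ‖f x‖ ≤ C * (1 + ‖x‖) ^ N

/-- `f` decays faster than every negative power of `1 + ‖x‖`; no smoothness is required. -/
def RapidDecay (f : E → F) : Prop :=
  ∀ N : ℕ, ∃ C : ℝ, ∀ x, (1 + ‖x‖) ^ N * ‖f x‖ ≤ C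

/-- `f` is continuously differentiable, and `f` and its derivative decay rapidly. -/
structure RapidDecayC1 [NormedSpace ℝ E] (f : E → ℝ) : Prop where
  contDiff : ContDiff ℝ 1 f
  decay : RapidDecay f
  decay_fderiv : RapidDecay (fderiv ℝ f)

lemma hasPolynomialGrowth_of_bounded {f : E → F} {C : ℝ} (hf : ∀ x, ‖f x‖ ≤ C) :
    HasPolynomialGrowth f :=
  ⟨0, C, by simpa using hf⟩

lemma hasPolynomialGrowth_const (c : F) : HasPolynomialGrowth (fun _ : E => c) :=
  hasPolynomialGrowth_of_bounded fun _ => le_rfl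

namespace HasPolynomialGrowth

variable {f g : E → F} {q r : E → ℝ}

lemma exists_nonneg (hf : HasPolynomialGrowth f) :
    ∃ (N : ℕ) (C : ℝ), 0 ≤ C ∧ ∀ x, ‖f x‖ ≤ C * (1 + ‖x‖) ^ N := by
  obtain ⟨N, C, hC⟩ := hf
  exact ⟨N, C, by simpa using (norm_nonneg _).trans (hC 0), hC⟩

lemma sub (hf : HasPolynomialGrowth f) (hg : HasPolynomialGrowth g) :
    HasPolynomialGrowth (fun x => f x - g x) := by
  obtain ⟨N, C, hC, hf⟩ := hf.exists_nonneg
  obtain ⟨M, D, hD, hg⟩ := hg.exists_nonneg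
  refine ⟨N + M, C + D, fun x => ?_⟩
  have hx : 1 ≤ 1 + ‖x‖ := le_add_of_nonneg_right (norm_nonneg x)
  calc ‖f x - g x‖ ≤ C * (1 + ‖x‖) ^ N + D * (1 + ‖x‖) ^ M := norm_sub_le_of_le (hf x) (hg x)
    _ ≤ C * (1 + ‖x‖) ^ (N + M) + D * (1 + ‖x‖) ^ (N + M) := by gcongr <;> simp
    _ = (C + D) * (1 + ‖x‖) ^ (N + M) := by ring

lemma mul (hq : HasPolynomialGrowth q) (hr : HasPolynomialGrowth r) :
    HasPolynomialGrowth (fun x => q x * r x) := by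
  obtain ⟨N, C, hC, hq⟩ := hq.exists_nonneg
  obtain ⟨M, D, hr⟩ := hr
  refine ⟨N + M, C * D, fun x => ?_⟩
  calc ‖q x * r x‖ = ‖q x‖ * ‖r x‖ := norm_mul _ _
    _ ≤ (C * (1 + ‖x‖) ^ N) * (D * (1 + ‖x‖) ^ M) := by gcongr <;> simp only [hq, hr]
    _ = C * D * (1 + ‖x‖) ^ (N + M) := by ring

lemma const_mul (hq : HasPolynomialGrowth q) (c : ℝ) : HasPolynomialGrowth (fun x => c * q x) :=
  (hasPolynomialGrowth_const c).mul hq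

lemma pow (hq : HasPolynomialGrowth q) (k : ℕ) : HasPolynomialGrowth (fun x => q x ^ k) := by
  obtain ⟨N, C, hq⟩ := hq
  refine ⟨N * k, C ^ k, fun x => ?_⟩
  rw [norm_pow, pow_mul, ← mul_pow]
  gcongr
  exact hq x

lemma comp_add_right (hf : HasPolynomialGrowth f) (y : E) :
    HasPolynomialGrowth (fun x => f (x + y)) := by
  obtain ⟨N, C, hC, hf⟩ := hf.exists_nonneg
  refine ⟨N, C * (1 + ‖y‖) ^ N, fun x => (hf _).trans ?_⟩
  have : 1 + ‖x + y‖ ≤ (1 + ‖y‖) * (1 + ‖x‖) := by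
    nlinarith [norm_add_le x y, norm_nonneg x, norm_nonneg y]
  rw [mul_assoc, ← mul_pow]
  gcongr

lemma mul_rapidDecay (hq : HasPolynomialGrowth q) (hr : RapidDecay r) :
    RapidDecay (fun x => q x * r x) := by
  intro N
  obtain ⟨M, C, hC, hq⟩ := hq.exists_nonneg
  obtain ⟨D, hr⟩ := hr (N + M)
  refine ⟨C * D, fun x => ?_⟩
  calc (1 + ‖x‖) ^ N * ‖q x * r x‖ ≤ (1 + ‖x‖) ^ N * (C * (1 + ‖x‖) ^ M * ‖r x‖) := by
        rw [norm_mul]; gcongr; exact hq x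
    _ = C * ((1 + ‖x‖) ^ (N + M) * ‖r x‖) := by ring
    _ ≤ C * D := by gcongr; exact hr x

end HasPolynomialGrowth

lemma one_add_norm_le_mul_one_add_norm_smul_add [NormedSpace ℝ E] {l : ℝ} (hl : l ≠ 0) (x y : E) :
    1 + ‖x‖ ≤ (1 + |l|⁻¹) * (1 + ‖y‖) * (1 + ‖l • x + y‖) := by
  have hl' : 0 < |l|⁻¹ := inv_pos.2 (abs_pos.2 hl)
  have hx : ‖x‖ ≤ |l|⁻¹ * (‖l • x + y‖ + ‖y‖) := by
    rw [le_inv_mul_iff₀ (abs_pos.2 hl), ← Real.norm_eq_abs, ← norm_smul]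
    simpa using norm_sub_le (l • x + y) y
  have : 0 ≤ ‖y‖ * ‖l • x + y‖ := by positivity
  have : 0 ≤ |l|⁻¹ * (‖y‖ * ‖l • x + y‖) := by positivity
  nlinarith [norm_nonneg y, norm_nonneg (l • x + y)]

namespace RapidDecay

variable {f g : E → F}

lemma hasPolynomialGrowth (hf : RapidDecay f) : HasPolynomialGrowth f := by
  obtain ⟨C, hC⟩ := hf 0
  exact hasPolynomialGrowth_of_bounded (C := C) (by simpa using hC)

lemma mono {G : Type*} [NormedAddCommGroup G] {g : E → G} (hg : RapidDecay g)
    (hfg : ∀ x, ‖f x‖ ≤ ‖g x‖) : RapidDecay f := fun N =>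
  (hg N).imp fun _ hC x => (mul_le_mul_of_nonneg_left (hfg x) (by positivity)).trans (hC x)

lemma norm (hf : RapidDecay f) : RapidDecay (fun x => ‖f x‖) :=
  hf.mono fun x => (norm_norm (f x)).le

lemma add (hf : RapidDecay f) (hg : RapidDecay g) : RapidDecay (fun x => f x + g x) := by
  intro N
  obtain ⟨C, hC⟩ := hf N
  obtain ⟨D, hD⟩ := hg N
  refine ⟨C + D, fun x => ?_⟩
  calc (1 + ‖x‖) ^ N * ‖f x + g x‖ ≤ (1 + ‖x‖) ^ N * (‖f x‖ + ‖g x‖) := by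
        gcongr; exact norm_add_le _ _
    _ ≤ C + D := by rw [mul_add]; exact add_le_add (hC x) (hD x)

lemma exists_norm_comp_smul_add_le [NormedSpace ℝ E] (hf : RapidDecay f) (N : ℕ) :
    ∃ C, ∀ (l : ℝ) (x y : E), l ≠ 0 →
      (1 + ‖x‖) ^ N * ‖f (l • x + y)‖ ≤ ((1 + |l|⁻¹) * (1 + ‖y‖)) ^ N * C := by
  obtain ⟨C, hC⟩ := hf N
  refine ⟨C, fun l x y hl => ?_⟩
  calc (1 + ‖x‖) ^ N * ‖f (l • x + y)‖
      ≤ ((1 + |l|⁻¹) * (1 + ‖y‖) * (1 + ‖l • x + y‖)) ^ N * ‖f (l • x + y)‖ := by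
        gcongr; exact one_add_norm_le_mul_one_add_norm_smul_add hl x y
    _ = ((1 + |l|⁻¹) * (1 + ‖y‖)) ^ N * ((1 + ‖l • x + y‖) ^ N * ‖f (l • x + y)‖) := by
        rw [mul_pow, mul_assoc]
    _ ≤ ((1 + |l|⁻¹) * (1 + ‖y‖)) ^ N * C := by gcongr; exact hC _

lemma comp_smul [NormedSpace ℝ E] (hf : RapidDecay f) {l : ℝ} (hl : l ≠ 0) :
    RapidDecay (fun x => f (l • x)) := fun N => by
  obtain ⟨C, hC⟩ := hf.exists_norm_comp_smul_add_le N
  exact ⟨_, fun x => by simpa using hC l x 0 hl⟩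

lemma integrable [NormedSpace ℝ E] [FiniteDimensional ℝ E] [MeasurableSpace E] [BorelSpace E]
    {μ : Measure E} [μ.IsAddHaarMeasure] (hf : RapidDecay f) (hf_cont : Continuous f) :
    Integrable f μ := by
  set d := Module.finrank ℝ E
  obtain ⟨C, hC⟩ := hf (d + 1)
  have hd : (d : ℝ) < ((d + 1 : ℕ) : ℝ) := by push_cast; linarith
  refine ((integrable_one_add_norm (μ := μ) hd).const_mul C).mono'
    hf_cont.aestronglyMeasurable (.of_forall fun x => ?_)
  rw [Real.rpow_neg (by positivity), Real.rpow_natCast, ← div_eq_mul_inv,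
    le_div_iff₀' (by positivity)]
  exact hC x

end RapidDecay

lemma HasPolynomialGrowth.integrable_mul [NormedSpace ℝ E] [FiniteDimensional ℝ E]
    [MeasurableSpace E] [BorelSpace E] {μ : Measure E} [μ.IsAddHaarMeasure] {q r : E → ℝ}
    (hq : HasPolynomialGrowth q) (hq_cont : Continuous q) (hr : RapidDecay r)
    (hr_cont : Continuous r) : Integrable (fun x => q x * r x) μ :=
  (hq.mul_rapidDecay hr).integrable (hq_cont.mul hr_cont)

lemma one_add_pow_le_mul_exp {κ : ℝ} (hκ : 0 < κ) (N : ℕ) {t : ℝ} (ht : 0 ≤ t) :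
    (1 + t) ^ N ≤ N.factorial * exp κ / κ ^ N * exp (κ * t) := by
  have h : (κ * (1 + t)) ^ N / N.factorial ≤ exp (κ * (1 + t)) :=
    Real.pow_div_factorial_le_exp _ (by positivity) N
  rw [mul_pow, div_le_iff₀ (by positivity), mul_add, mul_one, exp_add] at h
  rw [div_mul_eq_mul_div, le_div_iff₀ (by positivity)]
  linarith

lemma rapidDecay_of_norm_le_mul_exp [ProperSpace E] {f : E → F} {κ R C : ℝ} (hf : Continuous f)
    (hκ : 0 < κ) (hbound : ∀ x, R ≤ ‖x‖ → ‖f x‖ ≤ C * exp (-κ * ‖x‖)) : RapidDecay f := by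
  intro N
  obtain ⟨D, hD⟩ := (isCompact_closedBall (0 : E) R).exists_bound_of_continuousOn
    (f := fun x => (1 + ‖x‖) ^ N * ‖f x‖) (by fun_prop)
  refine ⟨max D (N.factorial * exp κ / κ ^ N * C), fun x => ?_⟩
  rcases le_total ‖x‖ R with hx | hx
  · exact ((le_abs_self _).trans (hD x (by simpa using hx))).trans (le_max_left _ _)
  · refine le_max_of_le_right ?_
    calc (1 + ‖x‖) ^ N * ‖f x‖
        ≤ (N.factorial * exp κ / κ ^ N * exp (κ * ‖x‖)) * (C * exp (-κ * ‖x‖)) :=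
          mul_le_mul (one_add_pow_le_mul_exp hκ N (norm_nonneg x)) (hbound x hx)
            (norm_nonneg _) (by positivity)
      _ = N.factorial * exp κ / κ ^ N * C * (exp (κ * ‖x‖) * exp (-κ * ‖x‖)) := by ring
      _ = N.factorial * exp κ / κ ^ N * C := by rw [← exp_add]; simp

namespace RapidDecayC1

variable [NormedSpace ℝ E] {f g : E → ℝ}

lemma continuous (hf : RapidDecayC1 f) : Continuous f := hf.contDiff.continuous

lemma continuous_fderiv (hf : RapidDecayC1 f) : Continuous (fderiv ℝ f) :=
  hf.contDiff.continuous_fderiv one_ne_zero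

lemma differentiable (hf : RapidDecayC1 f) : Differentiable ℝ f :=
  hf.contDiff.differentiable one_ne_zero

lemma mul (hf : RapidDecayC1 f) (hg : RapidDecayC1 g) : RapidDecayC1 (fun x => f x * g x) where
  contDiff := hf.contDiff.mul hg.contDiff
  decay := hf.decay.hasPolynomialGrowth.mul_rapidDecay hg.decay
  decay_fderiv := by
    refine ((hf.decay.norm.hasPolynomialGrowth.mul_rapidDecay hg.decay_fderiv.norm).add
      (hg.decay.norm.hasPolynomialGrowth.mul_rapidDecay hf.decay_fderiv.norm)).mono fun x => ?_
    rw [fderiv_fun_mul (hf.differentiable x) (hg.differentiable x)]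
    refine (norm_add_le _ _).trans ((le_abs_self _).trans_eq' ?_)
    rw [norm_smul, norm_smul]

lemma pow (hf : RapidDecayC1 f) {k : ℕ} (hk : k ≠ 0) : RapidDecayC1 (fun x => f x ^ k) := by
  obtain ⟨k, rfl⟩ := Nat.exists_eq_succ_of_ne_zero hk
  clear hk
  induction k with
  | zero => simpa using hf
  | succ k ih => simpa only [pow_succ] using ih.mul hf

end RapidDecayC1

end GrowthAndDecay

section Dilation

variable {E : Type*} [NormedAddCommGroup E] [NormedSpace ℝ E]

/-- The linear map `(l, y) ↦ l • x + y`: the image of a fixed point `x` under a dilation followed by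
a translation, as a function of the parameters. -/
def smulAddCLM (x : E) : ℝ × E →L[ℝ] E :=
  (ContinuousLinearMap.fst ℝ ℝ E).smulRight x + ContinuousLinearMap.snd ℝ ℝ E

@[simp]
lemma smulAddCLM_apply (x : E) (z : ℝ × E) : smulAddCLM x z = z.1 • x + z.2 := rfl

lemma norm_smulAddCLM_le (x : E) : ‖smulAddCLM x‖ ≤ 1 + ‖x‖ := by
  refine ContinuousLinearMap.opNorm_le_bound _ (by positivity) fun z => ?_
  calc ‖z.1 • x + z.2‖ ≤ ‖z.1‖ * ‖x‖ + ‖z.2‖ := by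
        rw [← norm_smul]; exact norm_add_le _ _
    _ ≤ ‖z‖ * ‖x‖ + ‖z‖ := by gcongr; exacts [norm_fst_le z, norm_snd_le z]
    _ = (1 + ‖x‖) * ‖z‖ := by ring

lemma continuous_smulAddCLM : Continuous (smulAddCLM (E := E)) :=
  ((ContinuousLinearMap.smulRightL ℝ (ℝ × E) E (.fst ℝ ℝ E)).continuous).add continuous_const

lemma continuous_smulAddCLM_apply (z : ℝ × E) : Continuous fun x => smulAddCLM x z :=
  continuous_smulAddCLM.clm_apply continuous_const

lemma HasPolynomialGrowth.exists_mul_norm_comp_smul_add_le {F : Type*} [NormedAddCommGroup F]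
    {q : E → ℝ} {f : E → F} (hq : HasPolynomialGrowth q) (hf : RapidDecay f) (N : ℕ) (K : ℝ) :
    ∃ C, ∀ (l : ℝ) (x y : E), l ≠ 0 → (1 + |l|⁻¹) * (1 + ‖y‖) ≤ K →
      (1 + ‖x‖) ^ N * (‖q x‖ * ‖f (l • x + y)‖) ≤ C := by
  obtain ⟨M, C, hC, hq⟩ := hq.exists_nonneg
  obtain ⟨D, hD, hf⟩ : ∃ D, 0 ≤ D ∧ ∀ (l : ℝ) (x y : E), l ≠ 0 →
      (1 + ‖x‖) ^ (N + M) * ‖f (l • x + y)‖ ≤ ((1 + |l|⁻¹) * (1 + ‖y‖)) ^ (N + M) * D := by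
    obtain ⟨D, hD⟩ := hf.exists_norm_comp_smul_add_le (N + M)
    exact ⟨|D|, abs_nonneg D, fun l x y hl => (hD l x y hl).trans (by gcongr; exact le_abs_self D)⟩
  refine ⟨C * (K ^ (N + M) * D), fun l x y hl hK => ?_⟩
  calc (1 + ‖x‖) ^ N * (‖q x‖ * ‖f (l • x + y)‖)
      ≤ (1 + ‖x‖) ^ N * (C * (1 + ‖x‖) ^ M * ‖f (l • x + y)‖) := by gcongr; exact hq x
    _ = C * ((1 + ‖x‖) ^ (N + M) * ‖f (l • x + y)‖) := by ring
    _ ≤ C * (((1 + |l|⁻¹) * (1 + ‖y‖)) ^ (N + M) * D) :=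
        mul_le_mul_of_nonneg_left (hf l x y hl) hC
    _ ≤ C * (K ^ (N + M) * D) := by gcongr

/-- The dilation `x ↦ l f(l x)`, which preserves the `L²` norm in dimension two. -/
def dilate (l : ℝ) (f : E → ℝ) (x : E) : ℝ := l * f (l • x)

/-- The generator `Λ f = f + x · ∇f` of the dilations `dilate`. -/
def dilationGen (f : E → ℝ) (x : E) : ℝ := f x + fderiv ℝ f x x

section

variable {f : E → ℝ}

lemma RapidDecayC1.continuous_fderiv_apply_self (hf : RapidDecayC1 f) :
    Continuous (fun x => fderiv ℝ f x x) :=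
  hf.continuous_fderiv.clm_apply continuous_id

lemma RapidDecayC1.rapidDecay_fderiv_apply_self (hf : RapidDecayC1 f) :
    RapidDecay (fun x => fderiv ℝ f x x) := by
  have hnorm : HasPolynomialGrowth (fun x : E => ‖x‖) := ⟨1, 1, by simp⟩
  refine (hnorm.mul_rapidDecay hf.decay_fderiv.norm).mono fun x => ?_
  simpa [mul_comm] using (fderiv ℝ f x).le_opNorm x

lemma RapidDecayC1.continuous_dilationGen (hf : RapidDecayC1 f) : Continuous (dilationGen f) :=
  hf.continuous.add hf.continuous_fderiv_apply_self

lemma RapidDecayC1.rapidDecay_dilationGen (hf : RapidDecayC1 f) : RapidDecay (dilationGen f) :=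
  hf.decay.add hf.rapidDecay_fderiv_apply_self

lemma RapidDecayC1.rapidDecayC1_dilate (hf : RapidDecayC1 f) {l : ℝ} (hl : l ≠ 0) :
    RapidDecayC1 (dilate l f) where
  contDiff := contDiff_const.mul (hf.contDiff.comp (contDiff_const_smul l))
  decay := (hasPolynomialGrowth_const l).mul_rapidDecay (hf.decay.comp_smul hl)
  decay_fderiv := by
    have hfderiv : fderiv ℝ (dilate l f) = fun x => l • l • fderiv ℝ f (l • x) := by
      funext x
      have : DifferentiableAt ℝ (fun x => f (l • x)) x :=
        (hf.differentiable _).comp x (differentiableAt_id.const_smul l)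
      rw [← fderiv_comp_smul, ← fderiv_const_smul this]
      rfl
    rw [hfderiv]
    refine ((hasPolynomialGrowth_const (l * l)).mul_rapidDecay
      (hf.decay_fderiv.comp_smul hl).norm).mono fun x => ?_
    simp [norm_smul, mul_assoc]

end

variable [FiniteDimensional ℝ E] [MeasurableSpace E] [BorelSpace E] {μ : Measure E}
  [μ.IsAddHaarMeasure] {q f : E → ℝ}

lemma exists_integrable_bound_fderiv_comp_smul_add (hq : HasPolynomialGrowth q)
    (hf : RapidDecay (fderiv ℝ f)) (K : ℝ) : ∃ bound : E → ℝ, Integrable bound μ ∧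
      ∀ (x : E) (z : ℝ × E), z.1 ≠ 0 → (1 + |z.1|⁻¹) * (1 + ‖z.2‖) ≤ K →
        ‖q x • (fderiv ℝ f (smulAddCLM x z)).comp (smulAddCLM x)‖ ≤ bound x := by
  set d := Module.finrank ℝ E
  have hd : (d : ℝ) < ((d + 1 : ℕ) : ℝ) := by push_cast; linarith
  obtain ⟨C, hC⟩ := hq.exists_mul_norm_comp_smul_add_le hf (d + 2) K
  refine ⟨_, (integrable_one_add_norm (μ := μ) hd).const_mul C, fun x z hz hK => ?_⟩
  rw [Real.rpow_neg (by positivity), Real.rpow_natCast, ← div_eq_mul_inv,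
    le_div_iff₀' (by positivity), norm_smul]
  calc (1 + ‖x‖) ^ (d + 1) * (‖q x‖ * ‖(fderiv ℝ f (smulAddCLM x z)).comp (smulAddCLM x)‖)
      ≤ (1 + ‖x‖) ^ (d + 1) * (‖q x‖ * (‖fderiv ℝ f (smulAddCLM x z)‖ * (1 + ‖x‖))) := by
        gcongr
        exact (ContinuousLinearMap.opNorm_comp_le _ _).trans (by gcongr; exact norm_smulAddCLM_le x)
    _ = (1 + ‖x‖) ^ (d + 2) * (‖q x‖ * ‖fderiv ℝ f (z.1 • x + z.2)‖) := by
        rw [smulAddCLM_apply]; ring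
    _ ≤ C := hC z.1 x z.2 hz hK

lemma RapidDecayC1.integrable_mul_comp_smul_add (hf : RapidDecayC1 f) (hq : Continuous q)
    (hq' : HasPolynomialGrowth q) {z : ℝ × E} (hz : z.1 ≠ 0) :
    Integrable (fun x => q x * f (smulAddCLM x z)) μ := by
  refine RapidDecay.integrable (fun N => ?_)
    (hq.mul (hf.continuous.comp (continuous_smulAddCLM_apply z)))
  obtain ⟨C, hC⟩ := hq'.exists_mul_norm_comp_smul_add_le hf.decay N
    ((1 + |z.1|⁻¹) * (1 + ‖z.2‖))
  exact ⟨C, fun x => by simpa only [norm_mul, smulAddCLM_apply] using hC z.1 x z.2 hz le_rfl⟩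

theorem RapidDecayC1.hasFDerivAt_integral_mul_comp_smul_add (hf : RapidDecayC1 f)
    (hq : Continuous q) (hq' : HasPolynomialGrowth q) {z₀ : ℝ × E} (hz₀ : z₀.1 ≠ 0) :
    Integrable (fun x => q x • (fderiv ℝ f (smulAddCLM x z₀)).comp (smulAddCLM x)) μ ∧
    HasFDerivAt (fun z => ∫ x, q x * f (smulAddCLM x z) ∂μ)
      (∫ x, q x • (fderiv ℝ f (smulAddCLM x z₀)).comp (smulAddCLM x) ∂μ) z₀ := by
  set κ : ℝ × E → ℝ := fun z => (1 + |z.1|⁻¹) * (1 + ‖z.2‖)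
  have hκ : ContinuousAt κ z₀ := by
    exact (continuousAt_const.add (continuousAt_fst.abs.inv₀ (abs_ne_zero.2 hz₀))).mul
      (continuousAt_const.add continuousAt_snd.norm)
  have hs : {z : ℝ × E | z.1 ≠ 0 ∧ κ z < κ z₀ + 1} ∈ 𝓝 z₀ :=
    (continuousAt_fst.eventually_ne hz₀).and (hκ.eventually_lt_const (lt_add_one _))
  obtain ⟨bound, hbound_int, hbound⟩ :=
    exists_integrable_bound_fderiv_comp_smul_add (μ := μ) hq' hf.decay_fderiv (κ z₀ + 1)
  have hmeas : AEStronglyMeasurable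
      (fun x => q x • (fderiv ℝ f (smulAddCLM x z₀)).comp (smulAddCLM x)) μ :=
    (hq.smul ((hf.continuous_fderiv.comp (continuous_smulAddCLM_apply z₀)).clm_comp
      continuous_smulAddCLM)).aestronglyMeasurable
  refine ⟨hbound_int.mono' hmeas (.of_forall fun x => hbound x z₀ hz₀ (lt_add_one _).le),
    hasFDerivAt_integral_of_dominated_of_fderiv_le
    (F' := fun z x => q x • (fderiv ℝ f (smulAddCLM x z)).comp (smulAddCLM x)) hs ?_
    (hf.integrable_mul_comp_smul_add hq hq' hz₀) hmeas
    (.of_forall fun x z hz => hbound x z hz.1 hz.2.le) hbound_int (.of_forall fun x z _ => ?_)⟩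
  · exact .of_forall fun z =>
      (hq.mul (hf.continuous.comp (continuous_smulAddCLM_apply z))).aestronglyMeasurable
  · exact (((hf.differentiable _).hasFDerivAt.comp z (smulAddCLM x).hasFDerivAt).const_mul (q x))

lemma RapidDecayC1.differentiable_integral_comp_add_mul (hf : RapidDecayC1 f)
    (hq : Continuous q) (hq' : HasPolynomialGrowth q) :
    Differentiable ℝ (fun y => ∫ x, q (x + y) * f x ∂μ) := by
  intro y
  have htranslate : (fun y => ∫ x, q (x + y) * f x ∂μ) =
      (fun z => ∫ x, q x * f (smulAddCLM x z) ∂μ) ∘ fun y => ((1 : ℝ), -y) := by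
    funext y
    rw [← integral_sub_right_eq_self _ y]
    simp [sub_eq_add_neg]
  rw [htranslate]
  exact (hf.hasFDerivAt_integral_mul_comp_smul_add hq hq' one_ne_zero).2.differentiableAt.comp y
    (by fun_prop)

lemma RapidDecayC1.hasDerivAt_integral_mul_comp_smul (hf : RapidDecayC1 f)
    (hq : Continuous q) (hq' : HasPolynomialGrowth q) :
    HasDerivAt (fun l : ℝ => ∫ x, q x * f (l • x) ∂μ) (∫ x, q x * fderiv ℝ f x x ∂μ) 1 := by
  obtain ⟨hint, hderiv⟩ :=
    hf.hasFDerivAt_integral_mul_comp_smul_add (μ := μ) hq hq' (z₀ := (1, 0)) one_ne_zero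
  have hcurve : HasDerivAt (fun l : ℝ => (l, (0 : E))) (1, 0) 1 :=
    (hasDerivAt_id 1).prodMk (hasDerivAt_const 1 0)
  have h := hderiv.comp_hasDerivAt (1 : ℝ) hcurve
  rw [ContinuousLinearMap.integral_apply hint] at h
  simpa [Function.comp_def] using h

lemma RapidDecayC1.hasDerivAt_integral_mul_dilate_pow (hf : RapidDecayC1 f)
    (hq : Continuous q) (hq' : HasPolynomialGrowth q) {k : ℕ} (hk : k ≠ 0) :
    HasDerivAt (fun l : ℝ => ∫ x, q x * dilate l f x ^ k ∂μ)
      (k * ∫ x, q x * (f x ^ (k - 1) * dilationGen f x) ∂μ) 1 := by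
  have hfk := hf.pow hk
  have hfactor : (fun l : ℝ => ∫ x, q x * dilate l f x ^ k ∂μ) =
      fun l => l ^ k * ∫ x, q x * f (l • x) ^ k ∂μ := by
    funext l
    rw [← integral_const_mul]
    simp only [dilate, mul_pow, mul_left_comm]
  have hpow : ∀ x, k * (q x * f x ^ k) + q x * fderiv ℝ (fun x => f x ^ k) x x =
      k * (q x * (f x ^ (k - 1) * dilationGen f x)) := fun x => by
    rw [fderiv_fun_pow k (hf.differentiable x), dilationGen, ← pow_sub_one_mul hk (f x)]
    simp only [nsmul_eq_mul, smul_apply, smul_eq_mul]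
    ring
  have hint : Integrable (fun x => q x * f x ^ k) μ :=
    hq'.integrable_mul hq hfk.decay hfk.continuous
  have hint' : Integrable (fun x => q x * fderiv ℝ (fun x => f x ^ k) x x) μ :=
    hq'.integrable_mul hq hfk.rapidDecay_fderiv_apply_self hfk.continuous_fderiv_apply_self
  rw [hfactor, ← integral_const_mul, ← integral_congr_ae (.of_forall hpow),
    integral_add (hint.const_mul _) hint', integral_const_mul]
  simpa using (hasDerivAt_pow k (1 : ℝ)).fun_mul (hfk.hasDerivAt_integral_mul_comp_smul hq hq')

end Dilation

section DirectionalDerivative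

variable {E : Type*} [NormedAddCommGroup E] [NormedSpace ℝ E] {f g : E → ℝ}

/-- The derivative of `f` in the direction `v`, as a function of the base point. -/
def dirDeriv (v : E) (f : E → ℝ) (x : E) : ℝ := fderiv ℝ f x v

lemma abs_dirDeriv_le (v : E) (f : E → ℝ) (x : E) : |dirDeriv v f x| ≤ ‖fderiv ℝ f x‖ * ‖v‖ :=
  (fderiv ℝ f x).le_opNorm v

lemma contDiff_dirDeriv (v : E) (hf : ContDiff ℝ 2 f) : ContDiff ℝ 1 (dirDeriv v f) :=
  (hf.fderiv_right (m := 1) (by norm_num)).clm_apply contDiff_const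

lemma differentiable_dirDeriv (v : E) (hf : ContDiff ℝ 2 f) : Differentiable ℝ (dirDeriv v f) :=
  (contDiff_dirDeriv v hf).differentiable one_ne_zero

lemma continuous_dirDeriv (v : E) (hf : ContDiff ℝ 1 f) : Continuous (dirDeriv v f) :=
  (hf.continuous_fderiv one_ne_zero).clm_apply continuous_const

lemma continuous_dirDeriv_dirDeriv (v : E) (hf : ContDiff ℝ 2 f) :
    Continuous (dirDeriv v (dirDeriv v f)) :=
  continuous_dirDeriv v (contDiff_dirDeriv v hf)

lemma hasCompactSupport_dirDeriv (v : E) (hf : HasCompactSupport f) :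
    HasCompactSupport (dirDeriv v f) :=
  hf.fderiv_apply ℝ v

lemma eventuallyEq_dirDeriv (v : E) {x : E} (hfg : f =ᶠ[𝓝 x] g) :
    dirDeriv v f =ᶠ[𝓝 x] dirDeriv v g :=
  hfg.fderiv.fun_comp fun D => D v

lemma dirDeriv_const_mul (v : E) (hf : Differentiable ℝ f) (c : ℝ) :
    dirDeriv v (fun x => c * f x) = fun x => c * dirDeriv v f x := by
  funext x
  simp [dirDeriv, fderiv_const_mul (hf x)]

lemma dirDeriv_comp_smul (v : E) (f : E → ℝ) (c : ℝ) :
    dirDeriv v (fun x => f (c • x)) = fun x => c * dirDeriv v f (c • x) := by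
  funext x
  simp [dirDeriv, fderiv_comp_smul]

lemma dirDeriv_add (v : E) (hf : Differentiable ℝ f) (hg : Differentiable ℝ g) :
    dirDeriv v (fun x => f x + g x) = fun x => dirDeriv v f x + dirDeriv v g x := by
  funext x
  simp [dirDeriv, fderiv_fun_add (hf x) (hg x)]

lemma dirDeriv_mul (v : E) (hf : Differentiable ℝ f) (hg : Differentiable ℝ g) :
    dirDeriv v (fun x => f x * g x) = fun x => f x * dirDeriv v g x + g x * dirDeriv v f x := by
  funext x
  simp [dirDeriv, fderiv_fun_mul (hf x) (hg x)]

lemma dirDeriv_dirDeriv_mul (v : E) (hf : ContDiff ℝ 2 f) (hg : ContDiff ℝ 2 g) (x : E) :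
    dirDeriv v (dirDeriv v (fun x => f x * g x)) x = f x * dirDeriv v (dirDeriv v g) x +
      2 * (dirDeriv v f x * dirDeriv v g x) + g x * dirDeriv v (dirDeriv v f) x := by
  have hf₁ := hf.differentiable two_ne_zero
  have hg₁ := hg.differentiable two_ne_zero
  have hf₂ := differentiable_dirDeriv v hf
  have hg₂ := differentiable_dirDeriv v hg
  rw [dirDeriv_mul v hf₁ hg₁, dirDeriv_add v (hf₁.fun_mul hg₂) (hg₁.fun_mul hf₂),
    dirDeriv_mul v hf₁ hg₂, dirDeriv_mul v hg₁ hf₂]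
  ring

variable [FiniteDimensional ℝ E] [MeasurableSpace E] [BorelSpace E] {μ : Measure E}
  [μ.IsAddHaarMeasure]

lemma integral_mul_dirDeriv_of_hasCompactSupport (v : E) (hf_supp : HasCompactSupport f)
    (hf : ContDiff ℝ 1 f) (hg : ContDiff ℝ 1 g) :
    ∫ x, f x * dirDeriv v g x ∂μ = -∫ x, dirDeriv v f x * g x ∂μ := by
  have hf' := continuous_dirDeriv v hf
  have hg' := continuous_dirDeriv v hg
  refine integral_mul_fderiv_eq_neg_fderiv_mul_of_integrable ?_ ?_ ?_
    (fun x _ => hf.differentiable one_ne_zero x) (fun x _ => hg.differentiable one_ne_zero x)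
  · exact (hf'.mul hg.continuous).integrable_of_hasCompactSupport
      (hasCompactSupport_dirDeriv v hf_supp).mul_right
  · exact (hf.continuous.mul hg').integrable_of_hasCompactSupport hf_supp.mul_right
  · exact (hf.continuous.mul hg.continuous).integrable_of_hasCompactSupport hf_supp.mul_right

lemma integral_mul_dirDeriv_dirDeriv_of_hasCompactSupport (v : E) (hf_supp : HasCompactSupport f)
    (hf : ContDiff ℝ 2 f) (hg : ContDiff ℝ 2 g) :
    ∫ x, f x * dirDeriv v (dirDeriv v g) x ∂μ = ∫ x, g x * dirDeriv v (dirDeriv v f) x ∂μ := by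
  rw [integral_mul_dirDeriv_of_hasCompactSupport v hf_supp (hf.of_le one_le_two)
      (contDiff_dirDeriv v hg),
    integral_mul_dirDeriv_of_hasCompactSupport v (hasCompactSupport_dirDeriv v hf_supp)
      (contDiff_dirDeriv v hf) (hg.of_le one_le_two), neg_neg]
  simp only [mul_comm]

end DirectionalDerivative

section Laplacian

variable {f g : R2 → ℝ}

lemma lap_eq_sum_dirDeriv (f : R2 → ℝ) (x : R2) : lap f x =
    ∑ i, dirDeriv (EuclideanSpace.single i 1) (dirDeriv (EuclideanSpace.single i 1) f) x :=
  rfl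

lemma continuous_lap (hf : ContDiff ℝ 2 f) : Continuous (lap f) :=
  continuous_finsetSum _ fun _ _ => continuous_dirDeriv_dirDeriv _ hf

lemma hasCompactSupport_lap (hf : HasCompactSupport f) : HasCompactSupport (lap f) := by
  have hlap : lap f = dirDeriv (EuclideanSpace.single 0 1) (dirDeriv (EuclideanSpace.single 0 1) f)
      + dirDeriv (EuclideanSpace.single 1 1) (dirDeriv (EuclideanSpace.single 1 1) f) :=
    funext fun x => Fin.sum_univ_two _
  rw [hlap]
  exact (hasCompactSupport_dirDeriv _ (hasCompactSupport_dirDeriv _ hf)).add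
    (hasCompactSupport_dirDeriv _ (hasCompactSupport_dirDeriv _ hf))

lemma lap_congr {x : R2} (hfg : f =ᶠ[𝓝 x] g) : lap f x = lap g x :=
  Finset.sum_congr rfl fun _ _ =>
    (eventuallyEq_dirDeriv _ (eventuallyEq_dirDeriv _ hfg)).eq_of_nhds

lemma lap_const_mul (hf : ContDiff ℝ 2 f) (c : ℝ) (x : R2) :
    lap (fun x => c * f x) x = c * lap f x := by
  simp only [lap_eq_sum_dirDeriv, dirDeriv_const_mul _ (hf.differentiable two_ne_zero),
    dirDeriv_const_mul _ (differentiable_dirDeriv _ hf), Finset.mul_sum]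

lemma lap_comp_smul (hf : ContDiff ℝ 2 f) (c : ℝ) (x : R2) :
    lap (fun x => f (c • x)) x = c ^ 2 * lap f (c • x) := by
  have hdiff (v : R2) : Differentiable ℝ (fun x => dirDeriv v f (c • x)) :=
    (differentiable_dirDeriv v hf).comp (differentiable_id.const_smul c)
  simp only [lap_eq_sum_dirDeriv, dirDeriv_comp_smul, dirDeriv_const_mul _ (hdiff _),
    Finset.mul_sum]
  exact Finset.sum_congr rfl fun i _ => by ring

lemma lap_mul (hf : ContDiff ℝ 2 f) (hg : ContDiff ℝ 2 g) (x : R2) :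
    lap (fun x => f x * g x) x = f x * lap g x +
      2 * (∑ i, dirDeriv (EuclideanSpace.single i 1) f x * dirDeriv (EuclideanSpace.single i 1) g x)
      + g x * lap f x := by
  simp only [lap_eq_sum_dirDeriv, dirDeriv_dirDeriv_mul _ hf hg, Finset.sum_add_distrib,
    Finset.mul_sum]

lemma integral_mul_lap_of_hasCompactSupport (hf_supp : HasCompactSupport f)
    (hf : ContDiff ℝ 2 f) (hg : ContDiff ℝ 2 g) : ∫ x, f x * lap g x = ∫ x, g x * lap f x := by
  simp only [lap_eq_sum_dirDeriv, Finset.mul_sum]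
  rw [integral_finsetSum, integral_finsetSum]
  · exact Finset.sum_congr rfl fun i _ =>
      integral_mul_dirDeriv_dirDeriv_of_hasCompactSupport _ hf_supp hf hg
  · exact fun i _ => (hg.continuous.mul
      (continuous_dirDeriv_dirDeriv _ hf)).integrable_of_hasCompactSupport
        (hasCompactSupport_dirDeriv _ (hasCompactSupport_dirDeriv _ hf_supp)).mul_left
  · exact fun i _ => (hf.continuous.mul
      (continuous_dirDeriv_dirDeriv _ hg)).integrable_of_hasCompactSupport hf_supp.mul_right

lemma abs_lap_mul_le (hf : ContDiff ℝ 2 f) (hg : ContDiff ℝ 2 g) (x : R2) :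
    |lap (fun x => f x * g x) x| ≤
      |f x| * |lap g x| + 4 * (‖fderiv ℝ f x‖ * ‖fderiv ℝ g x‖) + |g x| * |lap f x| := by
  have hbasis (i : Fin 2) : |dirDeriv (EuclideanSpace.single i 1) f x *
      dirDeriv (EuclideanSpace.single i 1) g x| ≤ ‖fderiv ℝ f x‖ * ‖fderiv ℝ g x‖ := by
    rw [abs_mul]
    gcongr
    · simpa using abs_dirDeriv_le (EuclideanSpace.single i 1) f x
    · simpa using abs_dirDeriv_le (EuclideanSpace.single i 1) g x
  rw [lap_mul hf hg, Fin.sum_univ_two]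
  refine (abs_add_le _ _).trans (add_le_add ((abs_add_le _ _).trans (add_le_add ?_ ?_)) ?_)
  · exact (abs_mul _ _).le
  · rw [abs_mul, abs_two]
    linarith [abs_add_le (dirDeriv (EuclideanSpace.single 0 1) f x *
      dirDeriv (EuclideanSpace.single 0 1) g x) (dirDeriv (EuclideanSpace.single 1 1) f x *
      dirDeriv (EuclideanSpace.single 1 1) g x), hbasis 0, hbasis 1]
  · exact (abs_mul _ _).le

/-- A sequence of compactly supported `C²` cutoffs with values and derivatives bounded by `K`,
equal to `1` on balls that exhaust the plane. -/
structure IsCutoffSequence (η : ℕ → R2 → ℝ) (K : ℝ) : Prop where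
  contDiff : ∀ n, ContDiff ℝ 2 (η n)
  hasCompactSupport : ∀ n, HasCompactSupport (η n)
  abs_le_one : ∀ n x, |η n x| ≤ 1
  norm_fderiv_le : ∀ n x, ‖fderiv ℝ (η n) x‖ ≤ K
  abs_lap_le : ∀ n x, |lap (η n) x| ≤ K
  eventuallyEq_one : ∀ x, ∀ᶠ n in atTop, η n =ᶠ[𝓝 x] 1

lemma exists_isCutoffSequence : ∃ η K, IsCutoffSequence η K := by
  let χ : ContDiffBump (0 : R2) := ⟨1, 2, by norm_num, by norm_num⟩
  have hχ : ContDiff ℝ 2 χ := χ.contDiff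
  obtain ⟨K₁, hK₁⟩ := (χ.hasCompactSupport.fderiv ℝ).exists_bound_of_continuous
    (hχ.continuous_fderiv two_ne_zero)
  obtain ⟨K₂, hK₂⟩ := (hasCompactSupport_lap χ.hasCompactSupport).exists_bound_of_continuous
    (continuous_lap hχ)
  let c : ℕ → ℝ := fun n => ((n : ℝ) + 1)⁻¹
  have hc_pos (n) : 0 < c n := by positivity
  have hc_le (n) : c n ≤ 1 := inv_le_one_of_one_le₀ (by linarith [n.cast_nonneg (α := ℝ)])
  refine ⟨fun n x => χ (c n • x), max K₁ K₂, ?_, ?_, ?_, ?_, ?_, fun x => ?_⟩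
  · exact fun n => hχ.comp (contDiff_const_smul (c n))
  · exact fun n => χ.hasCompactSupport.comp_smul (hc_pos n).ne'
  · exact fun n x => (abs_of_nonneg χ.nonneg).trans_le χ.le_one
  · intro n x
    rw [fderiv_comp_smul, norm_smul, Real.norm_of_nonneg (hc_pos n).le]
    exact (mul_le_of_le_one_left (norm_nonneg _) (hc_le n)).trans
      ((hK₁ _).trans (le_max_left _ _))
  · intro n x
    rw [lap_comp_smul hχ, abs_mul, abs_of_nonneg (sq_nonneg _)]
    exact (mul_le_of_le_one_left (abs_nonneg _) (pow_le_one₀ (hc_pos n).le (hc_le n))).trans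
      ((hK₂ _).trans (le_max_right _ _))
  · filter_upwards [tendsto_natCast_atTop_atTop.eventually_gt_atTop ‖x‖] with n hn
    filter_upwards [continuous_norm.continuousAt.eventually_lt_const hn] with y hy
    refine χ.one_of_mem_closedBall ?_
    rw [mem_closedBall_zero_iff, norm_smul, Real.norm_of_nonneg (hc_pos n).le]
    exact (inv_mul_le_iff₀ (by positivity)).2
      (by simpa [χ] using hy.le.trans (le_add_of_nonneg_right zero_le_one))

namespace IsCutoffSequence

variable {η : ℕ → R2 → ℝ} {K : ℝ}

lemma tendsto_integral_mul (hη : IsCutoffSequence η K) (hf : Integrable f) :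
    Tendsto (fun n => ∫ x, η n x * f x) atTop (𝓝 (∫ x, f x)) := by
  refine tendsto_integral_of_dominated_convergence (fun x => ‖f x‖)
    (fun n => (hη.contDiff n).continuous.aestronglyMeasurable.mul hf.1) hf.norm
    (fun n => .of_forall fun x => ?_) (.of_forall fun x => ?_)
  · rw [norm_mul]
    exact mul_le_of_le_one_left (norm_nonneg _) (hη.abs_le_one n x)
  · refine tendsto_const_nhds.congr' ?_
    filter_upwards [hη.eventuallyEq_one x] with n hn
    rw [hn.eq_of_nhds, Pi.one_apply, one_mul]

lemma tendsto_integral_mul_lap_mul (hη : IsCutoffSequence η K) (hf : ContDiff ℝ 2 f)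
    (hg : Continuous g) (hgf_lap : Integrable fun x => g x * lap f x)
    (hgf_fderiv : Integrable fun x => g x * ‖fderiv ℝ f x‖) (hgf : Integrable fun x => g x * f x) :
    Tendsto (fun n => ∫ x, g x * lap (fun y => η n y * f y) x) atTop
      (𝓝 (∫ x, g x * lap f x)) := by
  refine tendsto_integral_of_dominated_convergence
    (fun x => |g x * lap f x| + 4 * K * |g x * ‖fderiv ℝ f x‖| + K * |g x * f x|)
    (fun n => (hg.mul (continuous_lap ((hη.contDiff n).mul hf))).aestronglyMeasurable)
    ((hgf_lap.abs.add (hgf_fderiv.abs.const_mul _)).add (hgf.abs.const_mul K))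
    (fun n => .of_forall fun x => ?_) (.of_forall fun x => ?_)
  · have h₀ := mul_le_of_le_one_left (abs_nonneg (lap f x)) (hη.abs_le_one n x)
    have h₁ := mul_le_mul_of_nonneg_right (hη.norm_fderiv_le n x) (norm_nonneg (fderiv ℝ f x))
    have h₂ := mul_le_mul_of_nonneg_left (hη.abs_lap_le n x) (abs_nonneg (f x))
    simp only [norm_mul, abs_mul, Real.norm_eq_abs, abs_norm]
    calc |g x| * |lap (fun y => η n y * f y) x|
        ≤ |g x| * (|lap f x| + 4 * (K * ‖fderiv ℝ f x‖) + |f x| * K) := by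
          gcongr
          linarith [abs_lap_mul_le (hη.contDiff n) hf x]
      _ = _ := by ring
  · refine tendsto_const_nhds.congr' ?_
    filter_upwards [hη.eventuallyEq_one x] with n hn
    have hmul : (fun y => η n y * f y) =ᶠ[𝓝 x] f := by
      filter_upwards [hn] with y hy
      rw [hy, Pi.one_apply, one_mul]
    rw [lap_congr hmul]

end IsCutoffSequence

/-- Nothing is known about the gradient of `g`, so the cutoff is put on `f` and both derivatives
are moved onto the product `η n * f`. -/
theorem integral_mul_lap_comm (hf : ContDiff ℝ 2 f) (hg : ContDiff ℝ 2 g)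
    (hfg_lap : Integrable fun x => f x * lap g x) (hgf_lap : Integrable fun x => g x * lap f x)
    (hgf_fderiv : Integrable fun x => g x * ‖fderiv ℝ f x‖) (hgf : Integrable fun x => g x * f x) :
    ∫ x, f x * lap g x = ∫ x, g x * lap f x := by
  obtain ⟨η, K, hη⟩ := exists_isCutoffSequence
  refine tendsto_nhds_unique (hη.tendsto_integral_mul hfg_lap) ?_
  refine (hη.tendsto_integral_mul_lap_mul hf hg.continuous hgf_lap hgf_fderiv hgf).congr
    fun n => ?_
  simp only [← mul_assoc]
  exact (integral_mul_lap_of_hasCompactSupport (hη.hasCompactSupport n).mul_right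
    ((hη.contDiff n).mul hf) hg).symm

end Laplacian

section RadialFunctions

section InnerProductSpace

variable {E : Type*} [NormedAddCommGroup E] [InnerProductSpace ℝ E] {u : ℝ → ℝ} {u' : ℝ} {x : E}

lemma hasFDerivAt_norm_of_ne_zero (hx : x ≠ 0) :
    HasFDerivAt (fun y : E => ‖y‖) (‖x‖⁻¹ • innerSL ℝ x) x := by
  have h := (hasStrictFDerivAt_norm_sq x).hasFDerivAt.sqrt (by simpa using hx)
  simp only [Real.sqrt_sq (norm_nonneg _)] at h
  refine h.congr_fderiv ?_
  ext v
  simp only [one_div, mul_inv_rev, smul_apply, coe_innerSL_apply, nsmul_eq_mul,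
    Nat.cast_ofNat, smul_eq_mul]
  ring

lemma hasFDerivAt_comp_norm (hx : x ≠ 0) (hu : HasDerivAt u u' ‖x‖) :
    HasFDerivAt (fun y : E => u ‖y‖) ((u' / ‖x‖) • innerSL ℝ x) x :=
  (hu.comp_hasFDerivAt x (hasFDerivAt_norm_of_ne_zero hx)).congr_fderiv
    (by rw [smul_smul, div_eq_mul_inv])

lemma norm_fderiv_comp_norm (hx : x ≠ 0) (hu : HasDerivAt u u' ‖x‖) :
    ‖fderiv ℝ (fun y : E => u ‖y‖) x‖ = |u'| := by
  rw [(hasFDerivAt_comp_norm hx hu).fderiv, norm_smul, innerSL_apply_norm, norm_div, norm_norm,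
    div_mul_cancel₀ _ (norm_ne_zero_iff.2 hx), Real.norm_eq_abs]

lemma dirDeriv_comp_norm (v : E) (hx : x ≠ 0) (hu : HasDerivAt u u' ‖x‖) :
    dirDeriv v (fun y => u ‖y‖) x = u' / ‖x‖ * ⟪x, v⟫ := by
  simp [dirDeriv, (hasFDerivAt_comp_norm hx hu).fderiv]

lemma dirDeriv_dirDeriv_comp_norm {u' : ℝ → ℝ} {u'' : ℝ} (v : E) (hx : x ≠ 0)
    (hu : ∀ r > 0, HasDerivAt u (u' r) r) (hu' : HasDerivAt u' u'' ‖x‖) :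
    dirDeriv v (dirDeriv v (fun y => u ‖y‖)) x =
      (u'' * ‖x‖ - u' ‖x‖) / ‖x‖ ^ 3 * ⟪x, v⟫ ^ 2 + u' ‖x‖ / ‖x‖ * ‖v‖ ^ 2 := by
  have hx' : ‖x‖ ≠ 0 := norm_ne_zero_iff.2 hx
  have hfirst : dirDeriv v (fun y => u ‖y‖) =ᶠ[𝓝 x] fun y => u' ‖y‖ / ‖y‖ * ⟪v, y⟫ := by
    filter_upwards [eventually_ne_nhds hx] with y hy
    rw [dirDeriv_comp_norm v hy (hu _ (norm_pos_iff.2 hy)), real_inner_comm]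
  have hsecond : HasFDerivAt (fun y => u' ‖y‖ / ‖y‖ * ⟪v, y⟫) _ x :=
    (hasFDerivAt_comp_norm hx (hu'.fun_div (hasDerivAt_id' ‖x‖) hx')).mul
      (innerSL ℝ v).hasFDerivAt
  rw [(eventuallyEq_dirDeriv v hfirst).eq_of_nhds, dirDeriv, hsecond.fderiv]
  simp only [add_apply, smul_apply, innerSL_apply_apply, smul_eq_mul,
    real_inner_self_eq_norm_sq, real_inner_comm v x]
  field_simp
  ring

end InnerProductSpace

lemma lap_comp_norm {u u' : ℝ → ℝ} {u'' : ℝ} {x : R2} (hx : x ≠ 0)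
    (hu : ∀ r > 0, HasDerivAt u (u' r) r) (hu' : HasDerivAt u' u'' ‖x‖) :
    lap (fun y => u ‖y‖) x = u'' + u' ‖x‖ / ‖x‖ := by
  have hx' : ‖x‖ ≠ 0 := norm_ne_zero_iff.2 hx
  have hnorm : x 0 ^ 2 + x 1 ^ 2 = ‖x‖ ^ 2 := by
    simp [EuclideanSpace.norm_sq_eq, Fin.sum_univ_two]
  simp only [lap_eq_sum_dirDeriv, dirDeriv_dirDeriv_comp_norm _ hx hu hu', Fin.sum_univ_two,
    EuclideanSpace.inner_single_right, PiLp.norm_single, conj_trivial, one_mul, norm_one]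
  calc _ = (u'' * ‖x‖ - u' ‖x‖) / ‖x‖ ^ 3 * (x 0 ^ 2 + x 1 ^ 2) + 2 * (u' ‖x‖ / ‖x‖) := by ring
    _ = u'' + u' ‖x‖ / ‖x‖ := by rw [hnorm]; field_simp; ring

lemma integrableOn_Ioi_one_of_integrable_comp_norm {E : Type*} [NormedAddCommGroup E]
    [NormedSpace ℝ E] [Nontrivial E] [FiniteDimensional ℝ E] [MeasurableSpace E] [BorelSpace E]
    {μ : Measure E} [μ.IsAddHaarMeasure] {f : ℝ → ℝ} (hf : Continuous f)
    (hint : Integrable (fun x : E => f ‖x‖) μ) : IntegrableOn f (Ioi 1) := by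
  have hpolar : IntegrableOn (fun r : ℝ => r ^ (Module.finrank ℝ E - 1) • f r) (Ioi 1) :=
    ((integrable_fun_norm_addHaar μ).1 hint).mono_set (Ioi_subset_Ioi zero_le_one)
  refine Integrable.mono hpolar hf.aestronglyMeasurable ((ae_restrict_iff' measurableSet_Ioi).2
    (.of_forall fun r (hr : 1 < r) => ?_))
  rw [norm_smul, norm_pow, Real.norm_of_nonneg (zero_le_one.trans hr.le)]
  exact le_mul_of_one_le_left (norm_nonneg _) (one_le_pow₀ hr.le)

end RadialFunctions

namespace IsGroundState

variable {w : R2 → ℝ}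

/-- The profile `u` of a radial function `w`, normalised by `w x = u ‖x‖`, sampled along the first
coordinate axis. -/
def profile (w : R2 → ℝ) (r : ℝ) : ℝ := w (r • EuclideanSpace.single 0 1)

lemma contDiff_profile (hw : IsGroundState w) : ContDiff ℝ 2 (profile w) :=
  hw.smooth.comp (contDiff_id.smul contDiff_const)

lemma eq_profile_norm (hw : IsGroundState w) : w = fun x => profile w ‖x‖ :=
  funext fun x => hw.radial _ _ (by simp [norm_smul])

lemma hasDerivAt_profile (hw : IsGroundState w) (r : ℝ) :
    HasDerivAt (profile w) (deriv (profile w) r) r :=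
  (hw.contDiff_profile.differentiable two_ne_zero r).hasDerivAt

lemma contDiff_deriv_profile (hw : IsGroundState w) : ContDiff ℝ 1 (deriv (profile w)) :=
  (contDiff_succ_iff_deriv (n := 1).1 hw.contDiff_profile).2.2

lemma hasDerivAt_deriv_profile (hw : IsGroundState w) (r : ℝ) :
    HasDerivAt (deriv (profile w)) (deriv (deriv (profile w)) r) r :=
  (hw.contDiff_deriv_profile.differentiable one_ne_zero r).hasDerivAt

lemma norm_fderiv_eq (hw : IsGroundState w) {x : R2} (hx : x ≠ 0) :
    ‖fderiv ℝ w x‖ = |deriv (profile w) ‖x‖| := by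
  rw [← norm_fderiv_comp_norm hx (hw.hasDerivAt_profile ‖x‖), ← hw.eq_profile_norm]

lemma profile_ode (hw : IsGroundState w) {r : ℝ} (hr : 0 < r) :
    deriv (deriv (profile w)) r + deriv (profile w) r / r = profile w r - profile w r ^ 3 := by
  have hnorm : ‖r • (EuclideanSpace.single 0 1 : R2)‖ = r := by simp [norm_smul, hr.le]
  have hlap := lap_comp_norm (x := r • EuclideanSpace.single 0 1)
    (norm_ne_zero_iff.1 (hnorm.trans_ne hr.ne')) (fun s _ => hw.hasDerivAt_profile s)
    (hw.hasDerivAt_deriv_profile _)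
  rw [← hw.eq_profile_norm, hnorm] at hlap
  have heqn : _ - profile w r + profile w r ^ 3 = 0 := hw.eqn (r • EuclideanSpace.single 0 1)
  linarith

lemma integrableOn_profile_sq (hw : IsGroundState w) :
    IntegrableOn (fun r => profile w r ^ 2) (Ioi 1) := by
  refine integrableOn_Ioi_one_of_integrable_comp_norm (μ := (volume : Measure R2))
    (hw.contDiff_profile.continuous.pow 2) ?_
  simpa only [← congrFun hw.eq_profile_norm] using hw.sqInt

lemma integrableOn_deriv_profile_sq (hw : IsGroundState w) :
    IntegrableOn (fun r => deriv (profile w) r ^ 2) (Ioi 1) := by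
  refine integrableOn_Ioi_one_of_integrable_comp_norm (μ := (volume : Measure R2))
    (hw.contDiff_deriv_profile.continuous.pow 2) (hw.gradSqInt.congr ?_)
  filter_upwards [compl_mem_ae_iff.2 (measure_singleton (0 : R2))] with x hx
  rw [gradient, LinearIsometryEquiv.norm_map, hw.norm_fderiv_eq hx, sq_abs]

lemma tendsto_profile (hw : IsGroundState w) : Tendsto (profile w) atTop (𝓝 0) := by
  have hsq := tendsto_sq_zero_of_integrableOn_sq (fun r _ => hw.hasDerivAt_profile r)
    hw.contDiff_deriv_profile.continuous.aestronglyMeasurable hw.integrableOn_profile_sq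
    hw.integrableOn_deriv_profile_sq
  have habs : Tendsto (fun r => |profile w r|) atTop (𝓝 0) := by
    simpa only [Real.sqrt_sq_eq_abs, Real.sqrt_zero] using hsq.sqrt
  exact tendsto_zero_iff_abs_tendsto_zero _ |>.2 habs

-- Once `u² ≤ 3/4`, the nonlinear equation gives `u'' + u'/r = u - u³ ≥ (1/2)² u`.
lemma exists_exp_bound_profile (hw : IsGroundState w) : ∃ R C, 0 < R ∧ ∀ r ≥ R,
    profile w r ≤ C * exp (-(1 / 2) * r) ∧ |deriv (profile w) r| ≤ C * exp (-(1 / 2) * r) := by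
  have hsmall : ∀ᶠ r in atTop, profile w r ^ 2 < 3 / 4 :=
    (hw.tendsto_profile.pow 2).eventually_lt_const (by norm_num)
  obtain ⟨R, hR_pos, hR⟩ :=
    ((eventually_gt_atTop (0 : ℝ)).and (eventually_forall_ge_atTop.2 hsmall)).exists
  have hpos (r : ℝ) : 0 < profile w r := hw.pos _
  obtain ⟨C, hC⟩ := exists_exp_bound_of_radial_ode (κ := 1 / 2) hR_pos
    (fun r _ => hw.hasDerivAt_profile r) (fun r _ => hw.hasDerivAt_deriv_profile r)
    (fun r _ => hpos r) hw.tendsto_profile fun r hr => by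
      rw [hw.profile_ode (hR_pos.trans_le hr)]
      nlinarith [hpos r, hR r hr]
  exact ⟨R + 1, C, by linarith, hC⟩

theorem rapidDecayC1 (hw : IsGroundState w) : RapidDecayC1 w := by
  obtain ⟨R, C, hR, hC⟩ := hw.exists_exp_bound_profile
  refine ⟨hw.smooth.of_le one_le_two, ?_, ?_⟩
  · refine rapidDecay_of_norm_le_mul_exp (R := R) (C := C) hw.smooth.continuous
      one_half_pos fun x hx => ?_
    rw [Real.norm_of_nonneg (hw.pos x).le, hw.eq_profile_norm]
    exact (hC ‖x‖ hx).1
  · refine rapidDecay_of_norm_le_mul_exp (R := R) (C := C) (hw.smooth.continuous_fderiv two_ne_zero)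
      one_half_pos fun x hx => ?_
    rw [hw.norm_fderiv_eq (norm_pos_iff.1 (hR.trans_le hx))]
    exact (hC ‖x‖ hx).2

end IsGroundState

section Homogeneity

variable {h f : R2 → ℝ} {p : ℝ} {y : R2} {k : ℕ}

lemma homog_one : Homog (fun _ => 1) 0 := fun t _ _ => by simp

lemma Homog.hasPolynomialGrowth (hhom : Homog h p) (hh : Continuous h) :
    HasPolynomialGrowth h := by
  obtain ⟨C, hC⟩ := (isCompact_closedBall (0 : R2) 1).exists_bound_of_continuousOn hh.continuousOn
  obtain ⟨N, hN⟩ := exists_nat_ge p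
  refine ⟨N, C, fun x => ?_⟩
  have hx : 0 < 1 + ‖x‖ := by positivity
  have hrescale : h x = (1 + ‖x‖) ^ p * h ((1 + ‖x‖)⁻¹ • x) := by
    rw [← hhom _ hx, smul_inv_smul₀ hx.ne']
  have hball : ‖h ((1 + ‖x‖)⁻¹ • x)‖ ≤ C := by
    refine hC _ ?_
    rw [mem_closedBall_zero_iff, norm_smul_of_nonneg (by positivity), inv_mul_le_iff₀ hx]
    linarith
  have hpow : (1 + ‖x‖) ^ p ≤ (1 + ‖x‖) ^ N := by
    rw [← Real.rpow_natCast]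
    exact Real.rpow_le_rpow_of_exponent_le (le_add_of_nonneg_right (norm_nonneg x)) hN
  rw [hrescale, norm_mul, Real.norm_of_nonneg (by positivity), mul_comm]
  exact mul_le_mul hball hpow (by positivity) ((norm_nonneg _).trans hball)

lemma Homog.integral_comp_add_mul_dilate_pow (hhom : Homog h p) (f : R2 → ℝ) (y : R2) (k : ℕ)
    {l : ℝ} (hl : 0 < l) : ∫ x, h (x + y) * dilate l f x ^ k =
      l ^ (k - 2 - p) * ∫ x, h (x + l • y) * f x ^ k := by
  have hintegrand : ∀ x, h (x + y) * dilate l f x ^ k =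
      l ^ (k - p) * (h (l • x + l • y) * f (l • x) ^ k) := fun x => by
    rw [← smul_add, hhom l hl, dilate, mul_pow, Real.rpow_sub hl, Real.rpow_natCast]
    field_simp
  have hexponent : l ^ (k - 2 - p) = l ^ (k - p) * (l ^ 2)⁻¹ := by
    rw [← Real.rpow_natCast l 2, ← Real.rpow_neg hl.le, ← Real.rpow_add hl]
    congr 1
    push_cast
    ring
  simp only [hintegrand]
  rw [integral_const_mul,
    Measure.integral_comp_smul volume (fun x => h (x + l • y) * f x ^ k), hexponent,
    finrank_euclideanSpace_fin, abs_of_pos (by positivity), smul_eq_mul, mul_assoc]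

lemma Homog.integral_mul_pow_mul_dilationGen (hhom : Homog h p) (hh : Continuous h)
    (hf : RapidDecayC1 f) (hk : k ≠ 0)
    (hcrit : HasFDerivAt (fun y => ∫ x, h (x + y) * f x ^ k) (0 : R2 →L[ℝ] ℝ) y) :
    k * ∫ x, h (x + y) * (f x ^ (k - 1) * dilationGen f x) =
      (k - 2 - p) * ∫ x, h (x + y) * f x ^ k := by
  have hdilate := hf.hasDerivAt_integral_mul_dilate_pow (μ := volume) (q := fun x => h (x + y))
    (hh.comp (continuous_add_const y)) ((hhom.hasPolynomialGrowth hh).comp_add_right y) hk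
  have hray : HasDerivAt (fun l : ℝ => ∫ x, h (x + l • y) * f x ^ k) 0 1 := by
    have hsmul : HasDerivAt (fun l : ℝ => l • y) y 1 := by
      simpa using (hasDerivAt_id (1 : ℝ)).smul_const y
    rw [← one_smul ℝ y] at hcrit
    exact hcrit.comp_hasDerivAt (1 : ℝ) hsmul
  have hrpow : HasDerivAt (fun l : ℝ => l ^ (k - 2 - p)) (k - 2 - p) 1 := by
    simpa using Real.hasDerivAt_rpow_const (x := 1) (p := k - 2 - p) (.inl one_ne_zero)
  have hscaled := (hrpow.fun_mul hray).congr_of_eventuallyEq <|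
    (eventually_gt_nhds one_pos).mono fun l hl => hhom.integral_comp_add_mul_dilate_pow f y k hl
  simpa using hdilate.unique hscaled

lemma RapidDecayC1.integral_pow_mul_dilationGen (hf : RapidDecayC1 f) (hk : k ≠ 0) :
    k * ∫ x, f x ^ (k - 1) * dilationGen f x = (k - 2) * ∫ x, f x ^ k := by
  have h := homog_one.integral_mul_pow_mul_dilationGen continuous_const hf hk (y := 0)
    (hasFDerivAt_const _ _)
  simpa only [one_mul, sub_zero] using h

lemma hasFDerivAt_Hfun_zero (hhom : Homog h p) (hh : Continuous h) (hf : RapidDecayC1 f)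
    (hcrit : gradient (Hfun h f) y = 0) : HasFDerivAt (Hfun h f) (0 : R2 →L[ℝ] ℝ) y := by
  have hdiff : Differentiable ℝ (Hfun h f) :=
    (hf.pow two_ne_zero).differentiable_integral_comp_add_mul hh (hhom.hasPolynomialGrowth hh)
  simpa [hcrit] using (hdiff y).hasGradientAt.hasFDerivAt

lemma integral_mul_mul_dilationGen_of_gradient_Hfun_eq_zero (hhom : Homog h p) (hh : Continuous h)
    (hf : RapidDecayC1 f) (hcrit : gradient (Hfun h f) y = 0) :
    2 * ∫ x, h (x + y) * (f x * dilationGen f x) = -p * Hfun h f y := by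
  have h := hhom.integral_mul_pow_mul_dilationGen hh hf two_ne_zero
    (hasFDerivAt_Hfun_zero hhom hh hf hcrit)
  simpa [Hfun] using h

lemma Hfun_pos_of_unique_critical (hh : Continuous h) (hh' : HasPolynomialGrowth h)
    (hf : RapidDecayC1 f) (hf_pos : ∀ x, 0 < f x) (hnonneg : ∀ x, 0 ≤ h x)
    (huniq : ∀ z, gradient (Hfun h f) z = 0 → z = y) : 0 < Hfun h f y := by
  have hf_sq := hf.pow two_ne_zero
  obtain ⟨x, hx⟩ : ∃ x, h x ≠ 0 := by
    by_contra! hzero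
    have hH_zero : Hfun h f = fun _ => 0 := funext fun z => by simp [Hfun, hzero]
    obtain ⟨z, hz⟩ := exists_ne y
    exact hz (huniq z (by simp [hH_zero, gradient]))
  have hh_shift : Continuous fun x => h (x + y) := by fun_prop
  refine integral_pos_of_integrable_nonneg_nonzero (x := x - y) (hh_shift.mul hf_sq.continuous)
    ((hh'.comp_add_right y).integrable_mul hh_shift hf_sq.decay hf_sq.continuous)
    (fun x => mul_nonneg (hnonneg _) (sq_nonneg _)) (mul_ne_zero ?_ (pow_ne_zero 2 (hf_pos _).ne'))
  rwa [sub_add_cancel]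

end Homogeneity

section LinearizedOperator

variable {w f g ψ : R2 → ℝ} {l : ℝ}

lemma lap_eq_mul_sub_Lop (w f : R2 → ℝ) (x : R2) :
    lap f x = (1 - 3 * w x ^ 2) * f x - Lop w f x := by
  simp only [Lop]; ring

lemma integral_mul_Lop_comm (hw : Continuous w) (hw' : HasPolynomialGrowth w)
    (hf : ContDiff ℝ 2 f) (hf' : RapidDecayC1 f) (hlap : RapidDecay (lap f))
    (hg : ContDiff ℝ 2 g) (hg' : HasPolynomialGrowth g) (hLg : HasPolynomialGrowth (Lop w g)) :
    ∫ x, f x * Lop w g x = ∫ x, g x * Lop w f x := by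
  have hpotential : HasPolynomialGrowth (fun x => 1 - 3 * w x ^ 2) :=
    (hasPolynomialGrowth_const 1).sub ((hw'.pow 2).const_mul 3)
  have hlap_g : HasPolynomialGrowth (lap g) := by
    rw [funext (lap_eq_mul_sub_Lop w g)]
    exact (hpotential.mul hg').sub hLg
  have hgf_lap : Integrable fun x => g x * lap f x :=
    hg'.integrable_mul hg.continuous hlap (continuous_lap hf)
  have hfg_lap : Integrable fun x => f x * lap g x := by
    simpa only [mul_comm] using hlap_g.integrable_mul (continuous_lap hg) hf'.decay hf'.continuous
  have hpot : Integrable fun x => (1 - 3 * w x ^ 2) * g x * f x :=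
    (hpotential.mul hg').integrable_mul (by fun_prop) hf'.decay hf'.continuous
  have hcomm : ∫ x, f x * lap g x = ∫ x, g x * lap f x :=
    integral_mul_lap_comm hf hg hfg_lap hgf_lap
      (hg'.integrable_mul hg.continuous hf'.decay_fderiv.norm hf'.continuous_fderiv.norm)
      (hg'.integrable_mul hg.continuous hf'.decay hf'.continuous)
  calc ∫ x, f x * Lop w g x
      = ∫ x, (1 - 3 * w x ^ 2) * g x * f x - f x * lap g x := by
        congr 1; funext x; simp only [Lop]; ring
    _ = ∫ x, (1 - 3 * w x ^ 2) * g x * f x - g x * lap f x := by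
        rw [integral_sub hpot hfg_lap, integral_sub hpot hgf_lap, hcomm]
    _ = ∫ x, g x * Lop w f x := by
        congr 1; funext x; simp only [Lop]; ring

namespace IsGroundState

lemma contDiff_dilate (hw : IsGroundState w) (l : ℝ) : ContDiff ℝ 2 (dilate l w) :=
  contDiff_const.mul (hw.smooth.comp (contDiff_const_smul l))

lemma lap_dilate (hw : IsGroundState w) (l : ℝ) (x : R2) :
    lap (dilate l w) x = l ^ 2 * dilate l w x - dilate l w x ^ 3 := by
  have hscale : lap (dilate l w) x = l * (l ^ 2 * lap w (l • x)) := by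
    rw [← lap_comp_smul hw.smooth]
    exact lap_const_mul (hw.smooth.comp (contDiff_const_smul l)) l x
  have heqn : lap w (l • x) = w (l • x) - w (l • x) ^ 3 := by linarith [hw.eqn (l • x)]
  rw [hscale, heqn, dilate]
  ring

lemma rapidDecay_lap_dilate (hw : IsGroundState w) (hl : l ≠ 0) :
    RapidDecay (lap (dilate l w)) := by
  have hdecay := hw.rapidDecayC1.rapidDecayC1_dilate hl
  refine (((hasPolynomialGrowth_const (l ^ 2)).mul_rapidDecay hdecay.decay).add
    ((hasPolynomialGrowth_const (-1)).mul_rapidDecay (hdecay.pow three_ne_zero).decay)).mono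
    fun x => ?_
  rw [hw.lap_dilate, sub_eq_add_neg, neg_one_mul]

lemma integral_Lop_mul_dilate (hw : IsGroundState w) (hψ : ContDiff ℝ 2 ψ)
    (hψ' : HasPolynomialGrowth ψ) (hLψ : HasPolynomialGrowth (Lop w ψ)) (hl : l ≠ 0) :
    ∫ x, Lop w ψ x * dilate l w x = (1 - l ^ 2) * (∫ x, ψ x * dilate l w x) +
      (∫ x, ψ x * dilate l w x ^ 3) - 3 * ∫ x, ψ x * w x ^ 2 * dilate l w x := by
  have hdecay := hw.rapidDecayC1.rapidDecayC1_dilate hl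
  have hw_cont := hw.smooth.continuous
  have hw_growth := hw.rapidDecayC1.decay.hasPolynomialGrowth
  have hlinear : Integrable fun x => (1 - l ^ 2) * (ψ x * dilate l w x) :=
    (hψ'.integrable_mul hψ.continuous hdecay.decay hdecay.continuous).const_mul _
  have hcubic : Integrable fun x => ψ x * dilate l w x ^ 3 :=
    hψ'.integrable_mul hψ.continuous (hdecay.pow three_ne_zero).decay (hdecay.continuous.pow 3)
  have hpotential : Integrable fun x => 3 * (ψ x * w x ^ 2 * dilate l w x) :=
    ((hψ'.mul (hw_growth.pow 2)).integrable_mul (by fun_prop) hdecay.decay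
      hdecay.continuous).const_mul 3
  rw [← integral_const_mul, ← integral_const_mul, ← integral_add hlinear hcubic,
    ← integral_sub (by exact hlinear.add hcubic) hpotential]
  simp only [mul_comm (Lop w ψ _)]
  rw [integral_mul_Lop_comm hw_cont hw_growth (hw.contDiff_dilate l) hdecay
    (hw.rapidDecay_lap_dilate hl) hψ hψ' hLψ]
  congr 1
  funext x
  rw [Lop, hw.lap_dilate]
  ring

theorem integral_Lop_mul_dilationGen (hw : IsGroundState w) (hψ : ContDiff ℝ 2 ψ)
    (hψ' : HasPolynomialGrowth ψ) (hLψ : HasPolynomialGrowth (Lop w ψ)) :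
    ∫ x, Lop w ψ x * dilationGen w x = -2 * ∫ x, ψ x * w x := by
  have hw_cont := hw.smooth.continuous
  have hw_growth := hw.rapidDecayC1.decay.hasPolynomialGrowth
  have hLψ_cont : Continuous (Lop w ψ) := by
    have := continuous_lap hψ
    unfold Lop
    fun_prop
  have hweight : HasPolynomialGrowth (fun x => ψ x * w x ^ 2) := hψ'.mul (hw_growth.pow 2)
  have hderiv {q : R2 → ℝ} (hq : Continuous q) (hq' : HasPolynomialGrowth q) :
      HasDerivAt (fun l => ∫ x, q x * dilate l w x) (∫ x, q x * dilationGen w x) 1 := by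
    simpa using hw.rapidDecayC1.hasDerivAt_integral_mul_dilate_pow (μ := volume) hq hq' one_ne_zero
  have hcubic : HasDerivAt (fun l => ∫ x, ψ x * dilate l w x ^ 3)
      (3 * ∫ x, ψ x * w x ^ 2 * dilationGen w x) 1 := by
    simpa [mul_assoc] using hw.rapidDecayC1.hasDerivAt_integral_mul_dilate_pow (μ := volume)
      hψ.continuous hψ' three_ne_zero
  have hfactor : HasDerivAt (fun l : ℝ => 1 - l ^ 2) (-2) 1 := by
    simpa using (hasDerivAt_pow 2 (1 : ℝ)).const_sub 1
  have hrhs := ((hfactor.fun_mul (hderiv hψ.continuous hψ')).fun_add hcubic).fun_sub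
    ((hderiv (by fun_prop) hweight).const_mul 3)
  have hunique := (hderiv hLψ_cont hLψ).unique <| hrhs.congr_of_eventuallyEq <|
    (eventually_ne_nhds one_ne_zero).mono fun l hl => hw.integral_Lop_mul_dilate hψ hψ' hLψ hl
  simpa [dilate] using hunique

end IsGroundState

end LinearizedOperator

section Orthogonality

variable {w h : R2 → ℝ} {p : ℝ} {y : R2}

lemma xgrad_eq_fderiv_apply (f : R2 → ℝ) (x : R2) : xgrad f x = fderiv ℝ f x x := by
  rw [xgrad, real_inner_comm, gradient, InnerProductSpace.toDual_symm_apply]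

lemma RapidDecayC1.integral_mul_dilationGen {f : R2 → ℝ} (hf : RapidDecayC1 f) :
    ∫ x, f x * dilationGen f x = 0 := by
  simpa using hf.integral_pow_mul_dilationGen two_ne_zero

namespace IsGroundState

lemma integral_pow_four_pos (hw : IsGroundState w) : 0 < ∫ x, w x ^ 4 :=
  integral_pos_of_integrable_nonneg_nonzero (x := 0) (hw.smooth.continuous.pow 4) hw.quarticInt
    (fun x => by positivity) (pow_ne_zero 4 (hw.pos 0).ne')

lemma hasPolynomialGrowth_forcing (hw : IsGroundState w) (hh : HasPolynomialGrowth h) (y : R2)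
    (a b : ℝ) : HasPolynomialGrowth fun x => -(2 * w x ^ 3 / a) - 2 * h (x + y) * w x / b := by
  have hw_growth := hw.rapidDecayC1.decay.hasPolynomialGrowth
  have hsub := ((hw_growth.pow 3).const_mul (-(2 / a))).sub
    (((hh.comp_add_right y).mul hw_growth).const_mul (2 / b))
  convert hsub using 2 with x
  ring

lemma integral_forcing_mul_dilationGen (hw : IsGroundState w) (hp : p ≠ 0) (hh : Continuous h)
    (hhom : Homog h p) (hcrit : gradient (Hfun h w) y = 0) (hH : Hfun h w y ≠ 0) :
    ∫ x, (-(2 * w x ^ 3 / ∫ z, w z ^ 4) - 2 * h (x + y) * w x / (p * Hfun h w y)) *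
      dilationGen w x = 0 := by
  have hdecay := hw.rapidDecayC1
  have hquartic : 2 * ∫ x, w x ^ 3 * dilationGen w x = ∫ x, w x ^ 4 := by
    have := hdecay.integral_pow_mul_dilationGen four_ne_zero
    norm_num at this
    linarith
  have htrap := integral_mul_mul_dilationGen_of_gradient_Hfun_eq_zero hhom hh hdecay hcrit
  have hint_quartic : Integrable fun x => w x ^ 3 * dilationGen w x :=
    (hdecay.decay.hasPolynomialGrowth.pow 3).integrable_mul (hdecay.continuous.pow 3)
      hdecay.rapidDecay_dilationGen hdecay.continuous_dilationGen
  have hint_trap : Integrable fun x => h (x + y) * (w x * dilationGen w x) :=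
    ((hhom.hasPolynomialGrowth hh).comp_add_right y).integrable_mul (by fun_prop)
      (hdecay.decay.hasPolynomialGrowth.mul_rapidDecay hdecay.rapidDecay_dilationGen)
      (hdecay.continuous.mul hdecay.continuous_dilationGen)
  have hA := hw.integral_pow_four_pos.ne'
  calc _ = ∫ x, -(2 / ∫ z, w z ^ 4) * (w x ^ 3 * dilationGen w x) -
        2 / (p * Hfun h w y) * (h (x + y) * (w x * dilationGen w x)) := by
        congr 1; funext x; ring
    _ = -(2 * ∫ x, w x ^ 3 * dilationGen w x) / (∫ z, w z ^ 4) -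
        (2 * ∫ x, h (x + y) * (w x * dilationGen w x)) / (p * Hfun h w y) := by
        rw [integral_sub (hint_quartic.const_mul _) (hint_trap.const_mul _), integral_const_mul,
          integral_const_mul]
        ring
    _ = 0 := by
        rw [hquartic, htrap]
        field_simp
        ring

end IsGroundState

end Orthogonality

theorem orthogonality_identities_general {w h : R2 → ℝ} {p : ℝ} {y0 : R2} (hw : IsGroundState w)
    (hp : p ≠ 0) (hh : Continuous h) (hhom : Homog h p) (hcrit : gradient (Hfun h w) y0 = 0)
    (hH : Hfun h w y0 ≠ 0) {ψ1 : R2 → ℝ} (hψ1s : ContDiff ℝ 2 ψ1) (hψ1 : HasPolynomialGrowth ψ1)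
    (hψ1e : ∀ x, Lop w ψ1 x =
      -(2 * (w x) ^ 3 / (∫ z, (w z) ^ 4)) - 2 * h (x + y0) * w x / (p * Hfun h w y0))
    {ψ2 : R2 → ℝ} (hψ2 : ∀ x, ψ2 x = -(1 / 2) * (w x + xgrad w x)) :
    (∫ x, w x * ψ1 x) = 0 ∧ (∫ x, w x * ψ2 x) = 0 := by
  constructor
  · have hLψ1 : HasPolynomialGrowth (Lop w ψ1) := by
      rw [funext hψ1e]
      exact hw.hasPolynomialGrowth_forcing (hhom.hasPolynomialGrowth hh) y0 _ _
    have hpairing := hw.integral_Lop_mul_dilationGen hψ1s hψ1 hLψ1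
    simp only [hψ1e, hw.integral_forcing_mul_dilationGen hp hh hhom hcrit hH] at hpairing
    simp only [mul_comm (w _)]
    linarith
  · have hψ2_gen : ∀ x, w x * ψ2 x = -(1 / 2) * (w x * dilationGen w x) := fun x => by
      rw [hψ2, xgrad_eq_fderiv_apply, dilationGen]; ring
    simp only [hψ2_gen, integral_const_mul, hw.rapidDecayC1.integral_mul_dilationGen, mul_zero]

/-- Lemma 3.3, first part: `∫ wψ₁ = 0` and `∫ wψ₂ = 0`. -/
theorem orthogonality_identities
    (w h : R2 → ℝ) (p : ℝ) (y0 : R2)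
    (hw : IsGroundState w) (hp : 2 ≤ p)
    (hsmooth : ContDiff ℝ 2 h)
    (hnonneg : ∀ x, 0 ≤ h x) (hhom : Homog h p)
    (hcrit : gradient (Hfun h w) y0 = 0)
    (huniq : ∀ y, gradient (Hfun h w) y = 0 → y = y0)
    -- `ψ₁`: the unique bounded solution of `∇ψ₁(0)=0`,
    -- `Lψ₁ = -2w³/∫w⁴ - 2h(·+y₀)w/(p∫h(·+y₀)w²)`
    (ψ1 : R2 → ℝ)
    (hψ1s : ContDiff ℝ 2 ψ1) (hψ1b : BddFun ψ1) (hψ1g : gradient ψ1 0 = 0)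
    (hψ1e : ∀ x, Lop w ψ1 x =
      -(2 * (w x) ^ 3 / (∫ z, (w z) ^ 4)) - 2 * h (x + y0) * w x / (p * Hfun h w y0))
    -- `ψ₂ = -(1/2)(w + x·∇w)`
    (ψ2 : R2 → ℝ) (hψ2 : ∀ x, ψ2 x = -(1 / 2) * (w x + xgrad w x))
    (hint1 : Integrable fun x => w x * ψ1 x)
    (hint2 : Integrable fun x => w x * ψ2 x) :
    (∫ x, w x * ψ1 x) = 0 ∧ (∫ x, w x * ψ2 x) = 0 :=
  orthogonality_identities_general hw (by linarith) hsmooth.continuous hhom hcrit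
    (Hfun_pos_of_unique_critical hsmooth.continuous (hhom.hasPolynomialGrowth hsmooth.continuous)
      hw.rapidDecayC1 hw.pos hnonneg huniq).ne'
    hψ1s (hψ1b.elim fun _ hM => hasPolynomialGrowth_of_bounded hM) hψ1e hψ2
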